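/- Let N ≅ ℤ^d be a lattice, let 𝒜 = {v_1,...,v_k} ⊂ N generate N as a group with deg(v_i) = 1 for a group homomorphism deg : N → ℤ, let Δ = conv(𝒜), K the cone over Δ, and let Σ be a simplicial fan induced by a regular triangulation of Δ with support K and all rays generated by elements of 𝒜. Then the ring R = ℂ[𝚺] and, for any parameters χ, ξ ∈ N ⊗ ℝ, the R-modules ℂ[𝚺;χ] and the shadow module ℂ[𝚺;χ]_ξ are Cohen–Macaulay of dimension d; moreover, for any basis (g_1,...,g_d) of M = Hom(N,ℤ), the elements Z_j = Σ_{i ∈ I(𝚺)} g_j(v_i)[v_i] form a regular sequence in R, and hence in ℂ[𝚺;χ] and ℂ[𝚺;χ]_ξ. -/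

import Mathlib

namespace GKZpaper

/-- The real cone spanned by the vectors `v i`, `i ∈ I`. -/
def realCone {d k : ℕ} (v : Fin k → Fin d → ℤ) (I : Finset (Fin k)) : Set (Fin d → ℝ) :=
  {x | ∃ c : Fin k → ℝ, (∀ i, 0 ≤ c i) ∧ (∀ i, i ∉ I → c i = 0) ∧
    ∀ j, x j = ∑ i, c i * (v i j : ℝ)}

/-- A (combinatorial model of a) rational simplicial fan together with the marked
lattice vectors `v i`; cones are recorded by the index sets of their generators. -/
structure StackyFan (d k : ℕ) where
  v : Fin k → Fin d → ℤ
  cones : Finset (Finset (Fin k))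
  empty_mem : ∅ ∈ cones
  downClosed : ∀ I ∈ cones, ∀ J ⊆ I, J ∈ cones
  simplicial : ∀ I ∈ cones,
    LinearIndependent ℝ (fun i : I => (fun j => (v i j : ℝ) : Fin d → ℝ))
  inter : ∀ I ∈ cones, ∀ J ∈ cones, realCone v I ∩ realCone v J = realCone v (I ∩ J)

variable {d k : ℕ}

/-- Every `v i` generates a ray of the fan. -/
def HasAllRays (F : StackyFan d k) : Prop := ∀ i, {i} ∈ F.cones

/-- The support of the fan. -/
def support (F : StackyFan d k) : Set (Fin d → ℝ) := ⋃ I ∈ F.cones, realCone F.v I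

/-- Maximal cones. -/
def IsMaxCone (F : StackyFan d k) (I : Finset (Fin k)) : Prop :=
  I ∈ F.cones ∧ ∀ J ∈ F.cones, I ⊆ J → J = I

def intPt {d : ℕ} (n : Fin d → ℤ) : Fin d → ℝ := fun j => (n j : ℝ)

/-- `Bx(σ;β)` for a complex parameter `β`: tuples `α` with `∑ αᵢ vᵢ ∈ N + β`,
`0 ≤ Re αᵢ < 1`, supported on `I`. -/
def BxCone (F : StackyFan d k) (β : Fin d → ℂ) (I : Finset (Fin k)) : Set (Fin k → ℂ) :=
  {α | (∀ i, 0 ≤ (α i).re ∧ (α i).re < 1) ∧ (∀ i, i ∉ I → α i = 0) ∧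
    ∃ n : Fin d → ℤ, ∀ j, ∑ i, α i * (F.v i j : ℂ) = (n j : ℂ) + β j}

/-- `Bx(𝚺;β)`: the union over the maximal cones. -/
def Bx (F : StackyFan d k) (β : Fin d → ℂ) : Set (Fin k → ℂ) :=
  {α | ∃ I, IsMaxCone F I ∧ α ∈ BxCone F β I}

/-- Real version of `Bx(σ;γ)`. -/
def BxConeR (F : StackyFan d k) (γ : Fin d → ℝ) (I : Finset (Fin k)) : Set (Fin k → ℝ) :=
  {a | (∀ i, 0 ≤ a i ∧ a i < 1) ∧ (∀ i, i ∉ I → a i = 0) ∧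
    ∃ n : Fin d → ℤ, ∀ j, ∑ i, a i * (F.v i j : ℝ) = (n j : ℝ) + γ j}

def BxR (F : StackyFan d k) (γ : Fin d → ℝ) : Set (Fin k → ℝ) :=
  {a | ∃ I, IsMaxCone F I ∧ a ∈ BxConeR F γ I}

/-- `Box(σ;γ) ⊂ N ⊗ ℝ` for a real parameter `γ`. -/
def BoxCone (F : StackyFan d k) (γ : Fin d → ℝ) (I : Finset (Fin k)) : Set (Fin d → ℝ) :=
  {c | (∃ n : Fin d → ℤ, ∀ j, c j = (n j : ℝ) + γ j) ∧
    ∃ a ∈ BxConeR F γ I, ∀ j, c j = ∑ i, a i * (F.v i j : ℝ)}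

def Box (F : StackyFan d k) (γ : Fin d → ℝ) : Set (Fin d → ℝ) :=
  {c | ∃ I, IsMaxCone F I ∧ c ∈ BoxCone F γ I}

/-- `I` is the minimal cone of the fan containing the point `x`. -/
def IsMinConeAt (F : StackyFan d k) (x : Fin d → ℝ) (I : Finset (Fin k)) : Prop :=
  I ∈ F.cones ∧ x ∈ realCone F.v I ∧ ∀ J ∈ F.cones, x ∈ realCone F.v J → I ⊆ J

/-- `w ∈ ∑ αᵢ vᵢ + ∑_{i ∈ I} ℤ₊ vᵢ`. -/
def shiftMem (F : StackyFan d k) (I : Finset (Fin k)) (α : Fin k → ℂ) (w : Fin d → ℂ) : Prop :=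
  ∃ m : Fin k → ℕ, (∀ i, i ∉ I → m i = 0) ∧
    ∀ j, w j = ∑ i, (α i + (m i : ℂ)) * (F.v i j : ℂ)

/-- Indexing set for the basis `[n+β, α]` of the deformed module `ℤ[𝚺;β]` (Definition 2). -/
def DefBasis (F : StackyFan d k) (β : Fin d → ℂ) : Set ((Fin d → ℂ) × (Fin k → ℂ)) :=
  {p | (∃ n : Fin d → ℤ, ∀ j, p.1 j = (n j : ℂ) + β j) ∧
    ∃ I, IsMaxCone F I ∧ p.2 ∈ BxCone F β I ∧ shiftMem F I p.2 p.1}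

/-- The defining condition for `[n'] ⬝ [n+β,α] = [n'+n+β,α']` via the maximal cone `I`. -/
def ActRelVia (F : StackyFan d k) (β : Fin d → ℂ) (I : Finset (Fin k)) (n' : Fin d → ℤ)
    (p p' : (Fin d → ℂ) × (Fin k → ℂ)) : Prop :=
  IsMaxCone F I ∧ intPt n' ∈ realCone F.v I ∧
    p.2 ∈ BxCone F β I ∧ shiftMem F I p.2 p.1 ∧
    p'.2 ∈ BxCone F β I ∧ shiftMem F I p'.2 p'.1 ∧
    ∀ j, p'.1 j = (n' j : ℂ) + p.1 j

/-- `[n'] ⬝ [n+β,α] = [n'+n+β,α']` (the product is nonzero with value `p'`). -/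
def ActRel (F : StackyFan d k) (β : Fin d → ℂ) (n' : Fin d → ℤ)
    (p p' : (Fin d → ℂ) × (Fin k → ℂ)) : Prop :=
  ∃ I, ActRelVia F β I n' p p'

/-- `Re β + δ Im β`, as a real vector. -/
def reDeform (β : Fin d → ℂ) (δ : ℝ) : Fin d → ℝ := fun j => (β j).re + δ * (β j).im

/-- `Re β + δ Im β`, regarded inside `N ⊗ ℂ`. -/
def reDeformC (β : Fin d → ℂ) (δ : ℝ) : Fin d → ℂ := fun j => ((β j).re + δ * (β j).im : ℝ)

end GKZpaper

namespace GKZpaper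

variable {d k : ℕ}

/-- The cone `K ⊂ N ⊗ ℝ` over `Δ = conv(𝒜)`: the nonnegative span of the `vᵢ`. -/
def Kcone (v : Fin k → Fin d → ℤ) : Set (Fin d → ℝ) :=
  {x | ∃ c : Fin k → ℝ, (∀ i, 0 ≤ c i) ∧ ∀ j, x j = ∑ i, c i * (v i j : ℝ)}

/-- `I(𝚺)`: the indices `i` such that `vᵢ` generates a ray of the fan. -/
def raysIdx (F : StackyFan d k) : Set (Fin k) := {i | {i} ∈ F.cones}

/-- The lattice points of `K`. -/
def latticeK (v : Fin k → Fin d → ℤ) : Set (Fin d → ℤ) := {n | intPt n ∈ Kcone v}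

/-- The setting of §4: `𝒜 = {v₁,…,v_k}` generates `N` as a group, `deg(vᵢ) = 1` for a
homomorphism `deg : N → ℤ`, and `Σ` is a fan coming from a regular triangulation of
`Δ = conv 𝒜`, with support `K` and rays among the `vᵢ`. -/
structure GKZSetting (d k : ℕ) where
  F : StackyFan d k
  deg : (Fin d → ℤ) →ₗ[ℤ] ℤ
  hdeg : ∀ i, deg (F.v i) = 1
  hgen : Submodule.span ℤ (Set.range F.v) = ⊤
  hsupp : support F = Kcone F.v
  /-- regularity of the triangulation: a convex piecewise linear support function,
  linear exactly on the maximal cones. -/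
  hreg : ∃ η : (Fin d → ℝ) → ℝ, ConvexOn ℝ (Kcone F.v) η ∧
    ∀ I, IsMaxCone F I → ∃ L : (Fin d → ℝ) →ₗ[ℝ] ℝ,
      (∀ x ∈ realCone F.v I, η x = L x) ∧
      ∀ x ∈ Kcone F.v, x ∉ realCone F.v I → L x < η x

/-- The set `L(α,v)` of Definition 4.3: tuples `l` with `∑ lᵢ vᵢ = β - v` and
`lᵢ - αᵢ ∈ ℤ` for all `i`. -/
def Lset (v : Fin k → Fin d → ℤ) (β : Fin d → ℂ) (α : Fin k → ℂ) (w : Fin d → ℤ) :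
    Set (Fin k → ℂ) :=
  {l | (∀ j, ∑ i, l i * (v i j : ℂ) = β j - (w j : ℂ)) ∧ ∀ i, ∃ z : ℤ, l i - α i = (z : ℂ)}

/-- The generating points of the shadow module `ℂ[𝚺;χ]_ξ`: the points `w = n + χ` of `K`
with `w + εξ ∈ K` for all sufficiently small `ε > 0`. -/
def ShadowPts (F : StackyFan d k) (χ ξ : Fin d → ℝ) : Set (Fin d → ℝ) :=
  {w | (∃ n : Fin d → ℤ, ∀ j, w j = (n j : ℝ) + χ j) ∧ w ∈ Kcone F.v ∧
    ∃ ε₀ : ℝ, 0 < ε₀ ∧ ∀ ε : ℝ, 0 < ε → ε ≤ ε₀ →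
      (fun j => w j + ε * ξ j) ∈ Kcone F.v}

/-- `Re β`. -/
def rePt (β : Fin d → ℂ) : Fin d → ℝ := fun j => (β j).re

end GKZpaper

namespace GKZpaper

variable {d k : ℕ}

/-- Two lattice points lie in a common cone of the fan. -/
def commonCone (F : StackyFan d k) (x y : Fin d → ℝ) : Prop :=
  ∃ I ∈ F.cones, x ∈ realCone F.v I ∧ y ∈ realCone F.v I

/-- The polynomial ring on the generators `[n]`, `n ∈ K ∩ N`, presenting `R = ℂ[𝚺]`. -/
abbrev FreeA (v : Fin k → Fin d → ℤ) := MvPolynomial ↥(latticeK v) ℂ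

/-- The defining relations of the deformed semigroup ring `ℂ[𝚺]`:
`[a]⬝[b] = [a+b]` when `a, b` lie in a common cone of `Σ`, `[a]⬝[b] = 0` otherwise,
and `[0] = 1`. -/
def relR (F : StackyFan d k) : Set (FreeA F.v) :=
  {p | ∃ a b c : ↥(latticeK F.v),
      commonCone F (intPt ↑a) (intPt ↑b) ∧ ((c : Fin d → ℤ) = ↑a + ↑b) ∧
      p = MvPolynomial.X a * MvPolynomial.X b - MvPolynomial.X c} ∪
  {p | ∃ a b : ↥(latticeK F.v), ¬ commonCone F (intPt ↑a) (intPt ↑b) ∧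
      p = MvPolynomial.X a * MvPolynomial.X b} ∪
  {p | ∃ z : ↥(latticeK F.v), ((z : Fin d → ℤ) = 0) ∧ p = MvPolynomial.X z - 1}

/-- The deformed semigroup ring `R = ℂ[𝚺]`, by generators and relations. -/
abbrev Rring (F : StackyFan d k) := FreeA F.v ⧸ Ideal.span (relR F)

/-- The element `[n]` of `R = ℂ[𝚺]`. -/
noncomputable def Rgen (F : StackyFan d k) (n : ↥(latticeK F.v)) : Rring F :=
  Ideal.Quotient.mk _ (MvPolynomial.X n)

lemma v_mem_latticeK (v : Fin k → Fin d → ℤ) (i : Fin k) : v i ∈ latticeK v := by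
  refine ⟨fun i' => if i' = i then 1 else 0, fun i' => by positivity, fun j => ?_⟩
  simp [intPt, ite_mul, Finset.sum_ite_eq']

/-- The element `Z_g = ∑_{i ∈ I(𝚺)} g(vᵢ)[vᵢ] ∈ R`. -/
noncomputable def Zelt (F : StackyFan d k) (g : (Fin d → ℤ) →ₗ[ℤ] ℤ) : Rring F :=
  letI := Classical.propDecidable
  ∑ i, if i ∈ raysIdx F then
    (algebraMap ℂ (Rring F) ((g (F.v i) : ℤ) : ℂ)) * Rgen F ⟨F.v i, v_mem_latticeK F.v i⟩
  else 0

/-- The lattice points indexing the basis `[n+χ]` of `ℂ[𝚺;χ]`. -/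
def Ppts (v : Fin k → Fin d → ℤ) (χ : Fin d → ℝ) : Set (Fin d → ℤ) :=
  {n | (fun j => (n j : ℝ) + χ j) ∈ Kcone v}

/-- The free `R`-module on the symbols `[n+χ]`. -/
abbrev MfreeR (F : StackyFan d k) (χ : Fin d → ℝ) := ↥(Ppts F.v χ) →₀ Rring F

/-- The defining relations of the `R`-module `ℂ[𝚺;χ]`: `[a]⬝[w] = [a+w]` if `a` and `w`
lie in a common cone, and `[a]⬝[w] = 0` otherwise. -/
def relM (F : StackyFan d k) (χ : Fin d → ℝ) : Set (MfreeR F χ) :=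
  {x | ∃ (a : ↥(latticeK F.v)) (w w' : ↥(Ppts F.v χ)),
      commonCone F (intPt ↑a) (fun j => ((w : Fin d → ℤ) j : ℝ) + χ j) ∧
      ((w' : Fin d → ℤ) = ↑a + ↑w) ∧
      x = Finsupp.single w (Rgen F a) - Finsupp.single w' 1} ∪
  {x | ∃ (a : ↥(latticeK F.v)) (w : ↥(Ppts F.v χ)),
      ¬ commonCone F (intPt ↑a) (fun j => ((w : Fin d → ℤ) j : ℝ) + χ j) ∧
      x = Finsupp.single w (Rgen F a)}

/-- The `R`-module `ℂ[𝚺;χ]`, by generators and relations. -/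
abbrev Mmod (F : StackyFan d k) (χ : Fin d → ℝ) :=
  MfreeR F χ ⧸ Submodule.span (Rring F) (relM F χ)

/-- The class of the basis element `[n+χ]` in `ℂ[𝚺;χ]`. -/
noncomputable def Mgen (F : StackyFan d k) (χ : Fin d → ℝ) (w : ↥(Ppts F.v χ)) :
    Mmod F χ :=
  Submodule.Quotient.mk (Finsupp.single w 1)

/-- The shadow module `ℂ[𝚺;χ]_ξ ⊆ ℂ[𝚺;χ]` (Definition 4.1): the `R`-submodule generated
by the `[n+χ]` with `n + χ + εξ ∈ K` for all sufficiently small `ε > 0`. -/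
noncomputable def ShadowSub (F : StackyFan d k) (χ ξ : Fin d → ℝ) :
    Submodule (Rring F) (Mmod F χ) :=
  Submodule.span (Rring F)
    {x | ∃ w : ↥(Ppts F.v χ),
      ((fun j => ((w : Fin d → ℤ) j : ℝ) + χ j) ∈ ShadowPts F χ ξ) ∧ x = Mgen F χ w}

end GKZpaper


namespace GKZpaper
open RingTheory.Sequence

/-- Weak regularity passes to extensions. -/
lemma weak_of_ses {R : Type*} [CommRing R] (rs : List R) :
    ∀ {A B C : Type _} [AddCommGroup A] [AddCommGroup B] [AddCommGroup C]
    [Module R A] [Module R B] [Module R C] (f : A →ₗ[R] B) (g : B →ₗ[R] C),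
    Function.Injective f → Function.Exact f g → Function.Surjective g →
    IsWeaklyRegular A rs → IsWeaklyRegular C rs → IsWeaklyRegular B rs := by
  induction rs with
  | nil => intros; exact IsWeaklyRegular.nil _ _
  | cons r rs ih =>
    intro A B C _ _ _ _ _ _ f g hf hfg hg hA hC
    rw [isWeaklyRegular_cons_iff] at hA hC ⊢
    refine ⟨isSMulRegular_of_range_eq_ker hf (LinearMap.exact_iff.mp hfg).symm hA.1 hC.1, ?_⟩
    refine ih (QuotSMulTop.map r f) (QuotSMulTop.map r g) ?_
      (QuotSMulTop.map_exact r hfg hg) (QuotSMulTop.map_surjective r hg) hA.2 hC.2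
    have h0 : Function.Exact (0 : (Unit →₀ R) →ₗ[R] A) f := by
      rw [LinearMap.exact_iff]
      simp [LinearMap.ker_eq_bot.mpr hf]
    have := QuotSMulTop.map_first_exact_on_four_term_exact_of_isSMulRegular_last h0 hfg hC.1
    rw [LinearMap.exact_iff] at this
    rw [← LinearMap.ker_eq_bot, this, map_zero, LinearMap.range_zero]

/-- Extension lemma, where the quotient is a module over another ring. -/
lemma weak_of_quot {R S : Type*} [CommRing R] [CommRing S] {M C : Type*} [AddCommGroup M]
    [Module R M] [AddCommGroup C] [Module S C] (N : Submodule R M) (f : M →+ C)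
    (hf : Function.Surjective f) (hk : ∀ x, f x = 0 ↔ x ∈ N) (as : List R) (bs : List S)
    (h : List.Forall₂ (fun r s => ∀ x, f (r • x) = s • f x) as bs)
    (hN : IsWeaklyRegular N as) (hC : IsWeaklyRegular C bs) : IsWeaklyRegular M as := by
  have hker : N.toAddSubgroup = f.ker := by
    ext x; simp [AddMonoidHom.mem_ker, hk]
  let e : (M ⧸ N) ≃+ C :=
    (QuotientAddGroup.quotientAddEquivOfEq hker).trans
      (QuotientAddGroup.quotientKerEquivOfSurjective f hf)
  have he : ∀ x : M, e (Submodule.Quotient.mk x) = f x := fun x => rfl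
  have hQ : IsWeaklyRegular (M ⧸ N) as := by
    refine (AddEquiv.isWeaklyRegular_congr (e := e) (bs := bs) ?_).mpr hC
    refine h.imp ?_
    intro r s hrs x
    obtain ⟨x, rfl⟩ := Submodule.Quotient.mk_surjective _ x
    rw [← Submodule.Quotient.mk_smul, he, he, hrs]
  have hN' : IsWeaklyRegular N as := hN
  refine weak_of_ses as N.subtype N.mkQ N.subtype_injective ?_ N.mkQ_surjective hN' hQ
  rw [LinearMap.exact_iff]; simp

/-- The variables form a weakly regular sequence. -/
lemma weak_X (d : ℕ) : IsWeaklyRegular (MvPolynomial (Fin d) ℂ)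
    (List.ofFn fun j : Fin d => (MvPolynomial.X j : MvPolynomial (Fin d) ℂ)) := by
  constructor
  intro i hi
  have hi' : i < d := by simpa using hi
  set rs := List.ofFn fun j : Fin d => (MvPolynomial.X j : MvPolynomial (Fin d) ℂ) with hrs
  have hI : Ideal.ofList (rs.take i) =
      Ideal.span (MvPolynomial.X '' {j : Fin d | (j : ℕ) < i}) := by
    unfold Ideal.ofList
    congr 1
    ext x
    simp only [Set.mem_ofPred_eq, Set.mem_image, hrs, List.mem_take_iff_getElem, List.length_ofFn,
      List.getElem_ofFn]
    constructor
    · rintro ⟨j, hj, rfl⟩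
      exact ⟨⟨j, by omega⟩, by simp; omega, rfl⟩
    · rintro ⟨j, hj, rfl⟩
      exact ⟨j, by omega, rfl⟩
  have hget : rs[i] = MvPolynomial.X ⟨i, hi'⟩ := by simp [hrs]
  rw [isSMulRegular_quotient_iff_mem_of_smul_mem, hget]
  intro p hp
  have hI2 : (Ideal.ofList (rs.take i) • ⊤ : Submodule (MvPolynomial (Fin d) ℂ)
      (MvPolynomial (Fin d) ℂ)) = Ideal.span (MvPolynomial.X '' {j : Fin d | (j : ℕ) < i}) := by
    rw [hI]; exact Ideal.mul_top _
  rw [hI2, smul_eq_mul, MvPolynomial.mem_ideal_span_X_image] at hp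
  rw [hI2, MvPolynomial.mem_ideal_span_X_image]
  intro m hm
  obtain ⟨j, hj, hj2⟩ := hp (m + Finsupp.single ⟨i, hi'⟩ 1) (by
    rw [MvPolynomial.mem_support_iff, mul_comm, MvPolynomial.coeff_mul_X]
    simpa [MvPolynomial.mem_support_iff] using hm)
  refine ⟨j, hj, ?_⟩
  have : (⟨i, hi'⟩ : Fin d) ≠ j := by
    rintro rfl; simp at hj
  simpa [Finsupp.single_apply, this] using hj2

/-- Invertible linear combinations of variables form a weakly regular sequence. -/
lemma weak_lin (d : ℕ) (W : Matrix (Fin d) (Fin d) ℂ) (hW : IsUnit W.det) :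
    IsWeaklyRegular (MvPolynomial (Fin d) ℂ)
    (List.ofFn fun j : Fin d => (∑ a, MvPolynomial.C (W j a) * MvPolynomial.X a :
      MvPolynomial (Fin d) ℂ)) := by
  let φ (W : Matrix (Fin d) (Fin d) ℂ) : MvPolynomial (Fin d) ℂ →ₐ[ℂ] MvPolynomial (Fin d) ℂ :=
    MvPolynomial.aeval fun j => ∑ a, MvPolynomial.C (W j a) * MvPolynomial.X a
  have hφ : ∀ W j, φ W (MvPolynomial.X j) = ∑ a, MvPolynomial.C (W j a) * MvPolynomial.X a :=
    fun W j => by simp [φ]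
  have hcomp : ∀ U V : Matrix (Fin d) (Fin d) ℂ, U * V = 1 →
      (φ V).comp (φ U) = AlgHom.id ℂ _ := by
    intro U V h
    apply MvPolynomial.algHom_ext
    intro j
    have hC : ∀ c : ℂ, (φ V) (MvPolynomial.C c) = MvPolynomial.C c := fun c => by
      simp [φ]
    simp only [AlgHom.comp_apply, hφ, map_sum, map_mul, hC, AlgHom.id_apply, Finset.mul_sum]
    rw [Finset.sum_comm]
    simp only [← mul_assoc, ← Finset.sum_mul, ← map_mul, ← map_sum]
    have : ∀ x, ∑ i, U j i * V i x = (1 : Matrix _ _ ℂ) j x := fun x => by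
      rw [← h, Matrix.mul_apply]
    simp [this, Matrix.one_apply, Finset.sum_ite_eq]
  let e : MvPolynomial (Fin d) ℂ ≃ₐ[ℂ] MvPolynomial (Fin d) ℂ :=
    AlgEquiv.ofAlgHom (φ W) (φ W⁻¹) (hcomp _ _ (Matrix.nonsing_inv_mul _ hW))
      (hcomp _ _ (Matrix.mul_nonsing_inv _ hW))
  refine (AddEquiv.isWeaklyRegular_congr (e := e.toRingEquiv.toAddEquiv) ?_).mp (weak_X d)
  rw [List.forall₂_iff_get]
  refine ⟨by simp, ?_⟩
  intro i h1 h2 x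
  have : e (MvPolynomial.X ⟨i, by simpa using h1⟩ * x) =
    (∑ a, MvPolynomial.C (W ⟨i, by simpa using h1⟩ a) * MvPolynomial.X a) * e x := by
    rw [map_mul]; congr 1; exact hφ _ _
  simpa using this

lemma weak_finsupp {R : Type*} [CommRing R] (B : Type*) (rs : List R)
    (h : IsWeaklyRegular R rs) : IsWeaklyRegular (B →₀ R) rs := by
  classical
  have h2 := h.isWeaklyRegular_lTensor (M₂ := B →₀ R)
  exact ((TensorProduct.rid R (B →₀ R)).isWeaklyRegular_congr rs).mp h2

/-- A regular sequence on the ring bounds the dimension below. -/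
lemma dim_ge_of_regular (n : ℕ) : ∀ {R : Type _} [CommRing R] (rs : List R), rs.length = n →
    IsRegular R rs → (n : WithBot ℕ∞) ≤ ringKrullDim R := by
  induction n with
  | zero =>
    intro R _ rs _ h
    have := h.nontrivial
    simpa using ringKrullDim_nonneg_of_nontrivial (R := R)
  | succ n ih =>
    intro R _ rs hl h
    match rs, hl with
    | r :: rs, hl =>
      rw [isRegular_cons_iff'] at h
      let e : (QuotSMulTop r R) ≃+ (R ⧸ Ideal.span {r}) :=
        (Submodule.quotEquivOfEq _ _ (by
          rw [← Submodule.ideal_span_singleton_smul]; simp)).toAddEquiv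
      have h2 : IsRegular (R ⧸ Ideal.span {r}) (rs.map (Ideal.Quotient.mk (Ideal.span {r}))) := by
        refine (AddEquiv.isRegular_congr (e := e) ?_).mp h.2
        refine List.forall₂_same.mpr ?_
        intro s _ x
        obtain ⟨x, rfl⟩ := Submodule.Quotient.mk_surjective _ x
        obtain ⟨s, rfl⟩ := Ideal.Quotient.mk_surjective s
        rfl
      have h3 := ih _ (by simpa using hl) h2
      have hr : r ∈ nonZeroDivisors R := by
        rw [mem_nonZeroDivisors_iff_right]
        intro x hx
        exact h.1.right_eq_zero_of_smul (by rw [smul_eq_mul, mul_comm]; exact hx)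
      refine le_trans ?_ (ringKrullDim_quotient_succ_le_of_nonZeroDivisor hr)
      push_cast
      gcongr

lemma dim_le_of_integral {P R : Type*} [CommRing P] [CommRing R] [Algebra P R]
    [Algebra.IsIntegral P R] : ringKrullDim R ≤ ringKrullDim P := by
  refine Order.krullDim_le_of_strictMono
    (fun p : PrimeSpectrum R => PrimeSpectrum.comap (algebraMap P R) p) ?_
  intro p q hpq
  exact Ideal.IsIntegral.comap_lt_comap (A := R) (R := P) (I := p.asIdeal) (J := q.asIdeal) hpq

end GKZpaper

namespace GKZpaper
open Filter Topology

variable {d k : ℕ}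

/-! ### Cones -/

lemma realCone_subset_Kcone (v : Fin k → Fin d → ℤ) (I : Finset (Fin k)) :
    realCone v I ⊆ Kcone v := by
  rintro x ⟨c, hc, -, hx⟩
  exact ⟨c, hc, hx⟩

lemma realCone_add {v : Fin k → Fin d → ℤ} {I : Finset (Fin k)} {x y : Fin d → ℝ}
    (hx : x ∈ realCone v I) (hy : y ∈ realCone v I) : x + y ∈ realCone v I := by
  obtain ⟨c, hc, hc0, hx⟩ := hx
  obtain ⟨c', hc', hc0', hy⟩ := hy
  refine ⟨c + c', fun i => add_nonneg (hc i) (hc' i), fun i hi => by simp [hc0 i hi, hc0' i hi],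
    fun j => ?_⟩
  simp [hx, hy, add_mul, Finset.sum_add_distrib]

lemma Kcone_add {v : Fin k → Fin d → ℤ} {x y : Fin d → ℝ}
    (hx : x ∈ Kcone v) (hy : y ∈ Kcone v) : x + y ∈ Kcone v := by
  obtain ⟨c, hc, hx⟩ := hx
  obtain ⟨c', hc', hy⟩ := hy
  refine ⟨c + c', fun i => add_nonneg (hc i) (hc' i), fun j => ?_⟩
  simp [hx, hy, add_mul, Finset.sum_add_distrib]

lemma Kcone_smul {v : Fin k → Fin d → ℤ} {x : Fin d → ℝ} {t : ℝ} (ht : 0 ≤ t)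
    (hx : x ∈ Kcone v) : t • x ∈ Kcone v := by
  obtain ⟨c, hc, hx⟩ := hx
  refine ⟨t • c, fun i => mul_nonneg ht (hc i), fun j => ?_⟩
  simp [hx, Finset.mul_sum, mul_assoc]

lemma zero_mem_realCone (v : Fin k → Fin d → ℤ) (I : Finset (Fin k)) :
    (0 : Fin d → ℝ) ∈ realCone v I :=
  ⟨0, fun _ => le_rfl, fun _ _ => rfl, fun j => by simp⟩

lemma gen_mem_realCone (v : Fin k → Fin d → ℤ) {I : Finset (Fin k)} {i : Fin k} (hi : i ∈ I) :
    intPt (v i) ∈ realCone v I := by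
  refine ⟨fun i' => if i' = i then 1 else 0, fun i' => by positivity, ?_, fun j => ?_⟩
  · intro i' hi'
    have : i' ≠ i := by rintro rfl; exact hi' hi
    simp [this]
  · simp [intPt, ite_mul, Finset.sum_ite_eq']

lemma coeff_unique (F : StackyFan d k) {I : Finset (Fin k)} (hI : I ∈ F.cones) {c c' : Fin k → ℝ}
    (hc : ∀ i, i ∉ I → c i = 0) (hc' : ∀ i, i ∉ I → c' i = 0)
    (h : ∀ j, ∑ i, c i * (F.v i j : ℝ) = ∑ i, c' i * (F.v i j : ℝ)) : c = c' := by
  have hli := F.simplicial I hI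
  rw [Fintype.linearIndependent_iff] at hli
  have h2 := hli (fun i => c i - c' i) (by
    ext j
    have e1 : ∀ c : Fin k → ℝ, (∀ i, i ∉ I → c i = 0) →
        ∑ i : I, c i * (F.v i j : ℝ) = ∑ i, c i * (F.v i j : ℝ) := by
      intro c hc
      rw [Finset.sum_coe_sort I (fun i => c i * (F.v i j : ℝ))]
      exact Finset.sum_subset (Finset.subset_univ _) (fun i _ hi => by simp [hc i hi])
    have := h j
    rw [← e1 c hc, ← e1 c' hc'] at this
    simp only [Finset.sum_apply, Pi.smul_apply, smul_eq_mul, sub_mul, Finset.sum_sub_distrib,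
      Pi.zero_apply]
    linarith)
  ext i
  by_cases hi : i ∈ I
  · have := h2 ⟨i, hi⟩
    simp only at this
    linarith
  · rw [hc i hi, hc' i hi]

/-- Cones of the fan intersect in faces. -/
lemma face (F : StackyFan d k) {I J : Finset (Fin k)} (hI : I ∈ F.cones) (hJ : J ∈ F.cones)
    {x y : Fin d → ℝ} (hx : x ∈ realCone F.v I) (hy : y ∈ realCone F.v I)
    (hxy : x + y ∈ realCone F.v J) : x ∈ realCone F.v J := by
  have h := F.inter I hI J hJ
  have hmem : x + y ∈ realCone F.v (I ∩ J) := h ▸ ⟨realCone_add hx hy, hxy⟩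
  obtain ⟨c, hc, hc0, hcx⟩ := hx
  obtain ⟨c', hc', hc0', hcy⟩ := hy
  obtain ⟨c'', hc'', hc0'', hcxy⟩ := hmem
  have hu : c + c' = c'' := by
    refine coeff_unique F hI (fun i hi => by simp [hc0 i hi, hc0' i hi])
      (fun i hi => hc0'' i (by simp [hi])) (fun j => ?_)
    rw [← hcxy, Pi.add_apply, hcx, hcy]
    simp [add_mul, Finset.sum_add_distrib]
  refine ⟨c, hc, ?_, hcx⟩
  intro i hi
  have h1 := congrFun hu i
  rw [hc0'' i (by simp [hi]), Pi.add_apply] at h1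
  have := hc i; have := hc' i
  linarith

/-! ### Full dimensional cones and their charts -/

/-- The full dimensional cones. -/
abbrev FullCone (F : StackyFan d k) := {I : Finset (Fin k) // I ∈ F.cones ∧ I.card = d}

/-- Coordinates attached to a full dimensional cone. -/
structure Chart (F : StackyFan d k) (I : Finset (Fin k)) where
  e : Fin d → Fin k
  inj : Function.Injective e
  img : ∀ i, i ∈ I ↔ ∃ a, e a = i
  b : Module.Basis (Fin d) ℝ (Fin d → ℝ)
  hb : ∀ a, b a = intPt (F.v (e a))

lemma exists_chart (F : StackyFan d k) (s : FullCone F) : Nonempty (Chart F s.1) := by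
  obtain ⟨I, hI, hc⟩ := s
  let q : Fin d ≃ I := (I.equivFinOfCardEq hc).symm
  have hli := (F.simplicial I hI).comp q q.injective
  let b := basisOfLinearIndependentOfCardEqFinrank' _ hli (by simp)
  refine ⟨⟨fun a => q a, fun a b h => q.injective (Subtype.ext h), fun i => ⟨fun hi => ?_, ?_⟩,
    b, fun a => ?_⟩⟩
  · exact ⟨q.symm ⟨i, hi⟩, by simp⟩
  · rintro ⟨a, rfl⟩; exact (q a).2
  · simp [b]; rfl

noncomputable def chart (F : StackyFan d k) (s : FullCone F) : Chart F s.1 :=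
  (exists_chart F s).some

/-- The coordinates on a full dimensional cone. -/
noncomputable def co (F : StackyFan d k) (s : FullCone F) (a : Fin d) :
    (Fin d → ℝ) →ₗ[ℝ] ℝ := (chart F s).b.coord a

lemma co_gen (F : StackyFan d k) (s : FullCone F) (a a' : Fin d) :
    co F s a (intPt (F.v ((chart F s).e a'))) = if a' = a then 1 else 0 := by
  rw [co, ← (chart F s).hb, Module.Basis.coord_apply, Module.Basis.repr_self,
    Finsupp.single_apply]

lemma co_sum (F : StackyFan d k) (s : FullCone F) (x : Fin d → ℝ) :
    ∑ a, co F s a x • intPt (F.v ((chart F s).e a)) = x := by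
  simp only [← (chart F s).hb]
  exact (chart F s).b.sum_repr x

lemma mem_cone_of_co (F : StackyFan d k) (s : FullCone F) {x : Fin d → ℝ}
    (h : ∀ a, 0 ≤ co F s a x) : x ∈ realCone F.v s.1 := by
  have : ∀ t : Finset (Fin d),
      ∑ a ∈ t, co F s a x • intPt (F.v ((chart F s).e a)) ∈ realCone F.v s.1 := by
    intro t
    induction t using Finset.induction_on with
    | empty => simpa using zero_mem_realCone _ _
    | insert a t ha ih =>
      rw [Finset.sum_insert ha]
      refine realCone_add ?_ ih
      obtain ⟨c, hc, hc0, hx⟩ := gen_mem_realCone F.v (((chart F s).img _).mpr ⟨a, rfl⟩)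
      refine ⟨co F s a x • c, fun i => mul_nonneg (h a) (hc i),
        fun i hi => by simp [hc0 i hi], fun j => ?_⟩
      simp [hx, Finset.mul_sum, mul_assoc]
  have h2 := this Finset.univ
  rwa [co_sum] at h2

lemma co_of_coeff (F : StackyFan d k) (s : FullCone F) {x : Fin d → ℝ} {c : Fin k → ℝ}
    (hc : ∀ i, i ∉ s.1 → c i = 0) (hx : ∀ j, x j = ∑ i, c i * (F.v i j : ℝ)) (a : Fin d) :
    co F s a x = c ((chart F s).e a) := by
  have hx' : x = ∑ i, c i • intPt (F.v i) := by
    ext j; rw [hx]; simp [intPt]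
  rw [hx', map_sum, Finset.sum_eq_single ((chart F s).e a)]
  · rw [map_smul, co_gen]; simp
  · intro i _ hi
    by_cases his : i ∈ s.1
    · obtain ⟨a', rfl⟩ := ((chart F s).img i).mp his
      rw [map_smul, co_gen, if_neg (by rintro rfl; exact hi rfl), smul_zero]
    · rw [hc i his, zero_smul, map_zero]
  · simp

lemma mem_cone_iff (F : StackyFan d k) (s : FullCone F) {x : Fin d → ℝ} :
    x ∈ realCone F.v s.1 ↔ ∀ a, 0 ≤ co F s a x := by
  refine ⟨?_, mem_cone_of_co F s⟩
  rintro ⟨c, hc, hc0, hx⟩ a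
  rw [co_of_coeff F s hc0 hx]
  exact hc _

lemma card_le (F : StackyFan d k) {I : Finset (Fin k)} (hI : I ∈ F.cones) : I.card ≤ d := by
  have := (F.simplicial I hI).fintype_card_le_finrank
  simpa using this

lemma fullCone_max (F : StackyFan d k) (s : FullCone F) : IsMaxCone F s.1 := by
  refine ⟨s.2.1, fun J hJ hsJ => ?_⟩
  exact (Finset.eq_of_subset_of_card_le hsJ ((card_le F hJ).trans s.2.2.ge)).symm

lemma eq_of_interior (F : StackyFan d k) (s t : FullCone F) {x : Fin d → ℝ}
    (hx : ∀ a, 0 < co F s a x) (ht : x ∈ realCone F.v t.1) : s = t := by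
  have hs : x ∈ realCone F.v s.1 := mem_cone_of_co F s fun a => (hx a).le
  have hst : x ∈ realCone F.v (s.1 ∩ t.1) := F.inter _ s.2.1 _ t.2.1 ▸ ⟨hs, ht⟩
  obtain ⟨c, hc, hc0, hcx⟩ := hst
  have hsub : s.1 ⊆ t.1 := by
    intro i hi
    by_contra hit
    obtain ⟨a, rfl⟩ := ((chart F s).img i).mp hi
    have h1 := hx a
    rw [co_of_coeff F s (fun i hi => hc0 i (by simp [hi])) hcx, hc0 _ (by simp [hit])] at h1
    exact lt_irrefl _ h1
  exact Subtype.ext ((fullCone_max F s).2 _ t.2.1 hsub).symm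

lemma ray_notMem (F : StackyFan d k) (s : FullCone F) {i : Fin k} (hi : {i} ∈ F.cones)
    (his : i ∉ s.1) : intPt (F.v i) ∉ realCone F.v s.1 := by
  intro h
  have h0 : intPt (F.v i) ∈ realCone F.v ({i} ∩ s.1) :=
    F.inter _ hi _ s.2.1 ▸ ⟨gen_mem_realCone F.v (by simp), h⟩
  rw [Finset.singleton_inter_of_notMem his] at h0
  obtain ⟨c, _, hc0, hx⟩ := h0
  have := F.simplicial _ hi
  refine this.ne_zero ⟨i, by simp⟩ ?_
  ext j
  have := hx j
  simp [hc0, intPt] at this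
  simp [this]

/-! ### Lexicographic signs -/

lemma ev_lex {a b c : ℝ} (h : 0 < a ∨ a = 0 ∧ (0 < b ∨ b = 0 ∧ 0 < c)) :
    ∀ᶠ ε in 𝓝[>] (0 : ℝ), 0 < a + ε * b + ε ^ 2 * c := by
  rcases h with h | ⟨rfl, h | ⟨rfl, h⟩⟩
  · have : Tendsto (fun ε : ℝ => a + ε * b + ε ^ 2 * c) (𝓝[>] 0) (𝓝 (a + 0 * b + 0 ^ 2 * c)) :=
      Tendsto.mono_left (Continuous.tendsto (by fun_prop) 0) nhdsWithin_le_nhds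
    exact this.eventually (lt_mem_nhds (by simpa using h))
  · have : Tendsto (fun ε : ℝ => b + ε * c) (𝓝[>] 0) (𝓝 (b + 0 * c)) :=
      Tendsto.mono_left (Continuous.tendsto (by fun_prop) 0) nhdsWithin_le_nhds
    filter_upwards [this.eventually (lt_mem_nhds (by simpa using h)), self_mem_nhdsWithin]
      with ε h1 h2
    have h2 : 0 < ε := h2
    nlinarith [mul_pos h2 h1]
  · filter_upwards [self_mem_nhdsWithin] with ε h2
    have h2 : 0 < ε := h2
    have := mul_pos (pow_pos h2 2) h
    simpa using this

lemma ev_lex_neg {a b c : ℝ} (h : a < 0 ∨ a = 0 ∧ (b < 0 ∨ b = 0 ∧ c < 0)) :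
    ∀ᶠ ε in 𝓝[>] (0 : ℝ), a + ε * b + ε ^ 2 * c < 0 := by
  have := ev_lex (a := -a) (b := -b) (c := -c) (by simpa using h)
  filter_upwards [this] with ε h
  linarith

lemma lex_of_freq {a b c : ℝ} (hc : c ≠ 0)
    (h : ∃ᶠ ε in 𝓝[>] (0 : ℝ), 0 ≤ a + ε * b + ε ^ 2 * c) :
    0 < a ∨ a = 0 ∧ (0 < b ∨ b = 0 ∧ 0 < c) := by
  by_contra hcon
  have : a < 0 ∨ a = 0 ∧ (b < 0 ∨ b = 0 ∧ c < 0) := by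
    push Not at hcon
    rcases lt_trichotomy a 0 with h1 | h1 | h1
    · exact Or.inl h1
    · refine Or.inr ⟨h1, ?_⟩
      have h2 := hcon.2 h1
      rcases lt_trichotomy b 0 with h3 | h3 | h3
      · exact Or.inl h3
      · exact Or.inr ⟨h3, lt_of_le_of_ne (h2.2 h3) hc⟩
      · linarith
    · linarith
  exact h ((ev_lex_neg this).mono fun ε h => not_le.mpr h)

lemma lex_of_ev {a b c : ℝ}
    (h : ∀ᶠ ε in 𝓝[>] (0 : ℝ), 0 < a + ε * b + ε ^ 2 * c) :
    0 < a ∨ a = 0 ∧ (0 < b ∨ b = 0 ∧ 0 < c) := by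
  by_cases hc : c = 0
  · subst hc
    by_contra hcon
    have h2 : a < 0 ∨ a = 0 ∧ b ≤ 0 := by
      push Not at hcon
      rcases lt_trichotomy a 0 with h1 | h1 | h1
      · exact Or.inl h1
      · exact Or.inr ⟨h1, (hcon.2 h1).1⟩
      · linarith
    have h3 : ∀ᶠ ε in 𝓝[>] (0 : ℝ), a + ε * b + ε ^ 2 * 0 ≤ 0 := by
      rcases h2 with h2 | ⟨rfl, h2⟩
      · exact (ev_lex_neg (Or.inl h2)).mono fun ε h => h.le
      · filter_upwards [self_mem_nhdsWithin] with ε hε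
        have hε : 0 < ε := hε
        nlinarith
    obtain ⟨ε, h4, h5⟩ := (h.and h3).exists
    linarith
  · exact lex_of_freq hc (h.mono fun ε h => h.le).frequently

/-! ### Generic vectors and cells -/

/-- A generic vector of `K`. -/
def Gen (F : StackyFan d k) (p : Fin d → ℝ) : Prop :=
  p ∈ Kcone F.v ∧ ∀ I ∈ F.cones, I.card < d →
    ∃ φ : (Fin d → ℝ) →ₗ[ℝ] ℝ, (∀ i ∈ I, φ (intPt (F.v i)) = 0) ∧ φ p ≠ 0

lemma span_real (S : GKZSetting d k) (φ : (Fin d → ℝ) →ₗ[ℝ] ℝ)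
    (h : ∀ i, φ (intPt (S.F.v i)) = 0) : φ = 0 := by
  have h1 : ∀ n : Fin d → ℤ, φ (intPt n) = 0 := by
    intro n
    have hn : n ∈ Submodule.span ℤ (Set.range S.F.v) := by rw [S.hgen]; trivial
    induction hn using Submodule.span_induction with
    | mem x hx => obtain ⟨i, rfl⟩ := hx; exact h i
    | zero => 
      have : intPt (0 : Fin d → ℤ) = 0 := by ext; simp [intPt]
      rw [this, map_zero]
    | add x y _ _ hx hy =>
      have : intPt (x + y) = intPt x + intPt y := by ext; simp [intPt]
      rw [this, map_add, hx, hy, add_zero]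
    | smul t x _ hx =>
      have : intPt (t • x) = (t : ℝ) • intPt x := by ext; simp [intPt]
      rw [this, map_smul, hx, smul_zero]
  apply LinearMap.pi_ext'
  intro j
  ext
  have := h1 (Pi.single j 1)
  have h2 : intPt (Pi.single j (1 : ℤ)) = Pi.single j (1 : ℝ) := by
    ext l; by_cases hl : l = j
    · subst hl; simp [intPt]
    · simp [intPt, hl]
  rw [h2] at this
  simpa using this

lemma exists_gen (S : GKZSetting d k) : ∃ p, Gen S.F p := by
  classical
  have hφ : ∀ I ∈ S.F.cones, I.card < d → ∃ φ : (Fin d → ℝ) →ₗ[ℝ] ℝ,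
      (∀ i ∈ I, φ (intPt (S.F.v i)) = 0) ∧ φ ≠ 0 := by
    intro I hI hc
    let T := Submodule.span ℝ (((I.image fun i => intPt (S.F.v i)) : Finset (Fin d → ℝ)) :
      Set (Fin d → ℝ))
    have hT : T < ⊤ := by
      apply Submodule.lt_top_of_finrank_lt_finrank
      refine (finrank_span_finset_le_card _).trans_lt ?_
      refine Finset.card_image_le.trans_lt ?_
      simpa using hc
    obtain ⟨φ, hφ0, hφ⟩ := Submodule.exists_le_ker_of_lt_top T hT
    refine ⟨φ, fun i hi => ?_, hφ0⟩
    exact LinearMap.mem_ker.mp (hφ (Submodule.subset_span (by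
      simp only [Finset.coe_image, Set.mem_image, Finset.mem_coe]; exact ⟨i, hi, rfl⟩)))
  choose! φ hφ1 hφ2 using hφ
  let q : Finset (Fin k) → Polynomial ℝ := fun I =>
    ∑ i : Fin k, Polynomial.monomial (i : ℕ) (φ I (intPt (S.F.v i)))
  have hq : ∀ I ∈ S.F.cones, I.card < d → q I ≠ 0 := by
    intro I hI hc h0
    apply hφ2 I hI hc
    apply span_real S
    intro i
    have := congrArg (fun p => Polynomial.coeff p (i : ℕ)) h0
    simpa [q, Polynomial.finsetSum_coeff, Polynomial.coeff_monomial, Fin.val_inj] using this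
  let Q := ∏ I ∈ S.F.cones.filter (fun I => I.card < d), q I
  have hQ : Q ≠ 0 := Finset.prod_ne_zero_iff.mpr fun I hI => by
    rw [Finset.mem_filter] at hI
    exact hq I hI.1 hI.2
  obtain ⟨t, ht, htQ⟩ : ∃ t : ℝ, 0 < t ∧ Q.eval t ≠ 0 := by
    by_contra hcon
    push Not at hcon
    refine hQ (Polynomial.eq_zero_of_infinite_isRoot Q ?_)
    exact (Set.Ioi_infinite (0 : ℝ)).mono fun t ht => hcon t ht
  refine ⟨∑ i : Fin k, t ^ (i : ℕ) • intPt (S.F.v i), ⟨fun i => t ^ (i : ℕ),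
    fun i => by positivity, fun j => by simp [intPt]⟩, fun I hI hc => ⟨φ I, hφ1 I hI hc, ?_⟩⟩
  intro h0
  apply htQ
  rw [Polynomial.eval_prod]
  refine Finset.prod_eq_zero (i := I) (by simp [hI, hc]) ?_
  simp only [q, Polynomial.eval_finsetSum, Polynomial.eval_monomial]
  simp only [map_sum, map_smul, smul_eq_mul] at h0
  rw [← h0]
  exact Finset.sum_congr rfl fun i _ => mul_comm _ _

/-- The half-open cone attached to a full dimensional cone. -/
def Cell (F : StackyFan d k) (ξ p : Fin d → ℝ) (s : FullCone F) (w : Fin d → ℝ) : Prop :=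
  ∀ a, 0 < co F s a w ∨ co F s a w = 0 ∧
    (0 < co F s a ξ ∨ co F s a ξ = 0 ∧ 0 < co F s a p)

lemma Cell.ev {F : StackyFan d k} {ξ p : Fin d → ℝ} {s : FullCone F} {w : Fin d → ℝ}
    (h : Cell F ξ p s w) :
    ∀ᶠ ε in 𝓝[>] (0 : ℝ), ∀ a, 0 < co F s a (w + ε • ξ + ε ^ 2 • p) := by
  rw [eventually_all]
  intro a
  simpa using ev_lex (h a)

lemma Cell.mem {F : StackyFan d k} {ξ p : Fin d → ℝ} {s : FullCone F} {w : Fin d → ℝ}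
    (h : Cell F ξ p s w) : w ∈ realCone F.v s.1 := by
  rw [mem_cone_iff]
  intro a
  rcases h a with h | h
  · exact h.le
  · exact h.1.ge

lemma Cell.add {F : StackyFan d k} {ξ p : Fin d → ℝ} {s : FullCone F} {w x : Fin d → ℝ}
    (h : Cell F ξ p s w) (hx : x ∈ realCone F.v s.1) : Cell F ξ p s (x + w) := by
  rw [mem_cone_iff] at hx
  intro a
  have hxa := hx a
  rw [map_add]
  rcases h a with h | ⟨h, h'⟩
  · left; linarith
  · rcases hxa.lt_or_eq with h2 | h2
    · left; linarith
    · right; exact ⟨by linarith, h'⟩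

lemma Cell.unique {F : StackyFan d k} {ξ p : Fin d → ℝ} {s t : FullCone F} {w : Fin d → ℝ}
    (h : Cell F ξ p s w) (h' : Cell F ξ p t w) : s = t := by
  obtain ⟨ε, h1, h2⟩ := (h.ev.and h'.ev).exists
  exact eq_of_interior F s t h1 (mem_cone_of_co F t fun a => (h2 a).le)

/-- The shadow condition on a real point. -/
def ShadowAt (F : StackyFan d k) (ξ w : Fin d → ℝ) : Prop :=
  ∃ ε₀ : ℝ, 0 < ε₀ ∧ ∀ ε : ℝ, 0 < ε → ε ≤ ε₀ → (fun j => w j + ε * ξ j) ∈ Kcone F.v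

lemma Cell.shadow {F : StackyFan d k} {ξ p : Fin d → ℝ} {s : FullCone F} {w : Fin d → ℝ}
    (h : Cell F ξ p s w) : ShadowAt F ξ w := by
  have : ∀ᶠ ε in 𝓝[>] (0 : ℝ), (fun j => w j + ε * ξ j) ∈ Kcone F.v := by
    have h1 : ∀ᶠ ε in 𝓝[>] (0 : ℝ), ∀ a, 0 ≤ co F s a (w + ε • ξ) := by
      rw [eventually_all]
      intro a
      have h2 : 0 < co F s a w ∨ co F s a w = 0 ∧ 0 ≤ co F s a ξ := by
        rcases h a with h | ⟨h, h' | h'⟩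
        · exact Or.inl h
        · exact Or.inr ⟨h, h'.le⟩
        · exact Or.inr ⟨h, h'.1.ge⟩
      rcases h2 with h2 | ⟨h2, h3⟩
      · filter_upwards [ev_lex (b := co F s a ξ) (c := 0) (Or.inl h2)] with ε h
        simp at h ⊢; exact h.le
      · filter_upwards [self_mem_nhdsWithin] with ε hε
        have hε : 0 < ε := hε
        simp only [map_add, map_smul, smul_eq_mul, h2, zero_add]
        positivity
    filter_upwards [h1] with ε h
    exact realCone_subset_Kcone _ _ (mem_cone_of_co F s h)
  obtain ⟨u, hu, hu2⟩ := (mem_nhdsGT_iff_exists_Ioc_subset).mp this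
  exact ⟨u, hu, fun ε h1 h2 => hu2 ⟨h1, h2⟩⟩

lemma Gen.co_ne {F : StackyFan d k} {p : Fin d → ℝ} (hp : Gen F p) (s : FullCone F) (a : Fin d) :
    co F s a p ≠ 0 := by
  classical
  have ha : (chart F s).e a ∈ s.1 := ((chart F s).img _).mpr ⟨a, rfl⟩
  obtain ⟨φ, h1, h2⟩ := hp.2 (s.1.erase ((chart F s).e a))
    (F.downClosed _ s.2.1 _ (Finset.erase_subset _ _)) (by
      rw [Finset.card_erase_of_mem ha, s.2.2]
      have := a.pos; omega)
  intro h0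
  apply h2
  rw [← co_sum F s p, map_sum]
  refine Finset.sum_eq_zero fun a' _ => ?_
  by_cases haa : a' = a
  · subst haa; rw [h0, zero_smul, map_zero]
  · rw [map_smul, h1, smul_zero]
    rw [Finset.mem_erase]
    exact ⟨fun h => haa ((chart F s).inj h), ((chart F s).img _).mpr ⟨a', rfl⟩⟩

/-- Every point of the shadow lies in a cell. -/
lemma exists_cell (S : GKZSetting d k) {ξ p w : Fin d → ℝ} (hp : Gen S.F p)
    (h : ShadowAt S.F ξ w) : ∃ s, Cell S.F ξ p s w := by
  obtain ⟨ε₀, h0, h1⟩ := h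
  have hev : ∀ᶠ ε in 𝓝[>] (0 : ℝ), w + ε • ξ + ε ^ 2 • p ∈ Kcone S.F.v := by
    filter_upwards [Ioc_mem_nhdsGT h0] with ε hε
    exact Kcone_add (h1 ε hε.1 hε.2) (Kcone_smul (by positivity) hp.1)
  have hfr : ∃ I ∈ S.F.cones, ∃ᶠ ε in 𝓝[>] (0 : ℝ),
      w + ε • ξ + ε ^ 2 • p ∈ realCone S.F.v I := by
    by_contra hcon
    simp only [not_exists, not_and, not_frequently] at hcon
    have h2 := (Filter.eventually_all_finset S.F.cones).mpr hcon
    obtain ⟨ε, h3, h4⟩ := (hev.and h2).exists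
    rw [← S.hsupp] at h3
    simp only [support, Set.mem_iUnion] at h3
    obtain ⟨I, hI, h3⟩ := h3
    exact h4 I hI h3
  obtain ⟨I, hI, hfr⟩ := hfr
  have hcard : I.card = d := by
    refine le_antisymm (card_le _ hI) (not_lt.mp fun hlt => ?_)
    obtain ⟨φ, hφ1, hφ2⟩ := hp.2 I hI hlt
    have hz : ∀ x ∈ realCone S.F.v I, φ x = 0 := by
      rintro x ⟨c, -, hc0, hx⟩
      have hx' : x = ∑ i, c i • intPt (S.F.v i) := by
        ext j; rw [hx]; simp [intPt]
      rw [hx', map_sum]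
      refine Finset.sum_eq_zero fun i _ => ?_
      by_cases hi : i ∈ I
      · rw [map_smul, hφ1 i hi, smul_zero]
      · rw [hc0 i hi, zero_smul, map_zero]
    have e1 : ∃ᶠ ε in 𝓝[>] (0 : ℝ), 0 ≤ φ w + ε * φ ξ + ε ^ 2 * φ p :=
      hfr.mono fun ε h => by simpa using (hz _ h).ge
    have e2 : ∃ᶠ ε in 𝓝[>] (0 : ℝ), φ w + ε * φ ξ + ε ^ 2 * φ p ≤ 0 :=
      hfr.mono fun ε h => by simpa using (hz _ h).le
    exact e2 ((ev_lex (lex_of_freq hφ2 e1)).mono fun ε h => not_le.mpr h)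
  refine ⟨⟨I, hI, hcard⟩, fun a => ?_⟩
  refine lex_of_freq (hp.co_ne _ a) (hfr.mono fun ε h => ?_)
  have := (mem_cone_iff S.F ⟨I, hI, hcard⟩).mp h a
  simpa using this

/-! ### Heights -/

lemma exists_hgt (S : GKZSetting d k) (ξ p : Fin d → ℝ) : ∃ hgt : FullCone S.F → ℝ ×ₗ ℝ,
    ∀ s t w x, Cell S.F ξ p s w → commonCone S.F x w → Cell S.F ξ p t (x + w) → s ≠ t →
      hgt t < hgt s := by
  obtain ⟨η, -, hη⟩ := S.hreg
  choose! L hL1 hL2 using hη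
  refine ⟨fun s => toLex (L s.1 ξ, L s.1 p), ?_⟩
  intro s t w x hs ⟨I, hI, hxI, hwI⟩ ht hst
  have hwt : w ∈ realCone S.F.v t.1 := by
    refine face S.F hI t.2.1 hwI hxI ?_
    rw [add_comm]; exact ht.mem
  have hms := fullCone_max S.F s
  have hmt := fullCone_max S.F t
  have hw : L s.1 w = L t.1 w := by
    rw [← hL1 _ hms w hs.mem, ← hL1 _ hmt w hwt]
  have hev : ∀ᶠ ε in 𝓝[>] (0 : ℝ), 0 < (L s.1 w - L t.1 w) + ε * (L s.1 ξ - L t.1 ξ) +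
      ε ^ 2 * (L s.1 p - L t.1 p) := by
    filter_upwards [hs.ev] with ε h
    have h1 : w + ε • ξ + ε ^ 2 • p ∈ realCone S.F.v s.1 :=
      mem_cone_of_co S.F s fun a => (h a).le
    have h2 := hL2 _ hmt _ (realCone_subset_Kcone _ _ h1)
      (fun h3 => hst (eq_of_interior S.F s t h h3))
    rw [hL1 _ hms _ h1] at h2
    simp only [map_add, map_smul, smul_eq_mul] at h2
    linarith
  rw [Prod.Lex.toLex_lt_toLex]
  rcases lex_of_ev hev with h | ⟨-, h | ⟨h, h'⟩⟩
  · linarith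
  · left; simp only; linarith
  · right; simp only; exact ⟨by linarith, by linarith⟩

end GKZpaper

namespace GKZpaper

variable {d k : ℕ}

/-! ### The model of the module `ℂ[𝚺;χ]` -/

/-- The point `n + χ`. -/
def pt (χ : Fin d → ℝ) (n : Fin d → ℤ) : Fin d → ℝ := fun j => (n j : ℝ) + χ j

lemma pt_add (χ : Fin d → ℝ) (a n : Fin d → ℤ) : pt χ (a + n) = intPt a + pt χ n := by
  ext j; simp [pt, intPt]; ring

lemma intPt_add (a b : Fin d → ℤ) : intPt (a + b) = intPt a + intPt b := by
  ext j; simp [intPt]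

lemma intPt_zero : intPt (0 : Fin d → ℤ) = 0 := by
  ext j; simp [intPt]

lemma add_mem_Ppts {v : Fin k → Fin d → ℤ} {χ : Fin d → ℝ} (a : ↥(latticeK v)) (w : ↥(Ppts v χ)) :
    (a : Fin d → ℤ) + w ∈ Ppts v χ := by
  change pt χ ((a : Fin d → ℤ) + w) ∈ Kcone v
  rw [pt_add]
  exact Kcone_add a.2 w.2

/-- The sum of a lattice point of `K` and a point of `K ∩ (N + χ)`. -/
def addP {v : Fin k → Fin d → ℤ} {χ : Fin d → ℝ} (a : ↥(latticeK v)) (w : ↥(Ppts v χ)) :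
    ↥(Ppts v χ) := ⟨a + w, add_mem_Ppts a w⟩

/-- The common cone condition for module elements. -/
def CC (F : StackyFan d k) (χ : Fin d → ℝ) (a : ↥(latticeK F.v)) (w : ↥(Ppts F.v χ)) : Prop :=
  commonCone F (intPt ↑a) (pt χ ↑w)

/-- The model vector space. -/
def Vmod (S : GKZSetting d k) (χ : Fin d → ℝ) := ↥(Ppts S.F.v χ) →₀ ℂ

noncomputable instance (S : GKZSetting d k) (χ : Fin d → ℝ) : AddCommGroup (Vmod S χ) :=
  inferInstanceAs (AddCommGroup (↥(Ppts S.F.v χ) →₀ ℂ))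

noncomputable instance (S : GKZSetting d k) (χ : Fin d → ℝ) : Module ℂ (Vmod S χ) :=
  inferInstanceAs (Module ℂ (↥(Ppts S.F.v χ) →₀ ℂ))

/-- The basis vector `[w]`. -/
noncomputable def bv (S : GKZSetting d k) (χ : Fin d → ℝ) (w : ↥(Ppts S.F.v χ)) : Vmod S χ :=
  (Finsupp.single w (1 : ℂ) : ↥(Ppts S.F.v χ) →₀ ℂ)

open Classical in
/-- The operator of multiplication by `[a]`. -/
noncomputable def opA (S : GKZSetting d k) (χ : Fin d → ℝ) (a : ↥(latticeK S.F.v)) :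
    Module.End ℂ (Vmod S χ) :=
  Finsupp.linearCombination ℂ (fun w => if CC S.F χ a w then bv S χ (addP a w) else 0)

open Classical in
lemma opA_bv (S : GKZSetting d k) (χ : Fin d → ℝ) (a : ↥(latticeK S.F.v)) (w) :
    opA S χ a (bv S χ w) = if CC S.F χ a w then bv S χ (addP a w) else 0 := by
  unfold opA bv
  erw [Finsupp.linearCombination_single]
  rw [one_smul]

lemma Vmod_ext {S : GKZSetting d k} {χ : Fin d → ℝ} {M : Type*} [AddCommGroup M] [Module ℂ M]
    {f g : Vmod S χ →ₗ[ℂ] M} (h : ∀ w, f (bv S χ w) = g (bv S χ w)) : f = g :=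
  Finsupp.lhom_ext' (fun w => LinearMap.ext_ring (h w))

/-- `a, b, w` lie in a common cone. -/
def CC3 (F : StackyFan d k) (x y z : Fin d → ℝ) : Prop :=
  ∃ I ∈ F.cones, x ∈ realCone F.v I ∧ y ∈ realCone F.v I ∧ z ∈ realCone F.v I

lemma cc3_of {F : StackyFan d k} {x y z : Fin d → ℝ} (h1 : commonCone F y z)
    (h2 : commonCone F x (y + z)) : CC3 F x y z := by
  obtain ⟨I, hI, hy, hz⟩ := h1
  obtain ⟨J, hJ, hx, hyz⟩ := h2
  exact ⟨J, hJ, hx, face F hI hJ hy hz hyz, face F hI hJ hz hy (by rwa [add_comm])⟩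

lemma cc3_iff {F : StackyFan d k} {x y z : Fin d → ℝ} :
    CC3 F x y z ↔ commonCone F y z ∧ commonCone F x (y + z) := by
  refine ⟨?_, fun h => cc3_of h.1 h.2⟩
  rintro ⟨I, hI, hx, hy, hz⟩
  exact ⟨⟨I, hI, hy, hz⟩, ⟨I, hI, hx, realCone_add hy hz⟩⟩

lemma cc_comm {F : StackyFan d k} {x y : Fin d → ℝ} (h : commonCone F x y) : commonCone F y x := by
  obtain ⟨I, hI, hx, hy⟩ := h
  exact ⟨I, hI, hy, hx⟩

lemma cc3_iff' {F : StackyFan d k} {x y z : Fin d → ℝ} :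
    CC3 F x y z ↔ commonCone F x y ∧ commonCone F (x + y) z := by
  have : CC3 F x y z ↔ CC3 F z x y := by
    constructor <;> rintro ⟨I, hI, h1, h2, h3⟩
    · exact ⟨I, hI, h3, h1, h2⟩
    · exact ⟨I, hI, h2, h3, h1⟩
  rw [this, cc3_iff]
  exact and_congr_right fun _ => ⟨cc_comm, cc_comm⟩

lemma cc3_swap {F : StackyFan d k} {x y z : Fin d → ℝ} (h : CC3 F x y z) : CC3 F y x z := by
  obtain ⟨I, hI, h1, h2, h3⟩ := h
  exact ⟨I, hI, h2, h1, h3⟩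

open Classical in
lemma opA_opA (S : GKZSetting d k) (χ : Fin d → ℝ) (a b : ↥(latticeK S.F.v)) (w) :
    opA S χ a (opA S χ b (bv S χ w)) =
      if CC3 S.F (intPt a) (intPt b) (pt χ w) then bv S χ (addP a (addP b w)) else 0 := by
  have h : CC3 S.F (intPt a) (intPt b) (pt χ w) ↔ CC S.F χ b w ∧ CC S.F χ a (addP b w) := by
    rw [cc3_iff]
    unfold CC addP
    rw [pt_add]
  rw [opA_bv]
  by_cases h1 : CC S.F χ b w
  · rw [if_pos h1, opA_bv]
    simp [h, h1]
  · simp [h, h1]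

lemma opA_comm (S : GKZSetting d k) (χ : Fin d → ℝ) (a b : ↥(latticeK S.F.v)) :
    opA S χ a * opA S χ b = opA S χ b * opA S χ a := by
  refine Vmod_ext fun w => ?_
  rw [Module.End.mul_apply, Module.End.mul_apply, opA_opA, opA_opA]
  have h1 : CC3 S.F (intPt a) (intPt b) (pt χ w) ↔ CC3 S.F (intPt b) (intPt a) (pt χ w) :=
    ⟨cc3_swap, cc3_swap⟩
  have h2 : addP a (addP b w) = addP b (addP a w) := by
    apply Subtype.ext
    simp only [addP]
    exact add_left_comm _ _ _
  rw [h2]; split_ifs <;> tauto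

lemma exists_cone (S : GKZSetting d k) {x : Fin d → ℝ} (hx : x ∈ Kcone S.F.v) :
    ∃ I ∈ S.F.cones, x ∈ realCone S.F.v I := by
  rw [← S.hsupp] at hx
  simpa [support] using hx

open scoped IsMulCommutative in
lemma exists_rep0 (S : GKZSetting d k) (χ : Fin d → ℝ) :
    ∃ ρ : FreeA S.F.v →ₐ[ℂ] Module.End ℂ (Vmod S χ),
      ∀ a, ρ (MvPolynomial.X a) = opA S χ a := by
  have hc : ∀ x ∈ Set.range (opA S χ), ∀ y ∈ Set.range (opA S χ), x * y = y * x := by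
    rintro _ ⟨a, rfl⟩ _ ⟨b, rfl⟩
    exact opA_comm S χ a b
  have := Algebra.isMulCommutative_adjoin ℂ hc
  let ρ0 : FreeA S.F.v →ₐ[ℂ] Algebra.adjoin ℂ (Set.range (opA S χ)) :=
    MvPolynomial.aeval fun a => ⟨opA S χ a, Algebra.subset_adjoin ⟨a, rfl⟩⟩
  refine ⟨(Algebra.adjoin ℂ (Set.range (opA S χ))).val.comp ρ0, fun a => ?_⟩
  simp [ρ0]

lemma exists_rep (S : GKZSetting d k) (χ : Fin d → ℝ) :
    ∃ ρ : Rring S.F →+* Module.End ℂ (Vmod S χ),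
      (∀ a, ρ (Rgen S.F a) = opA S χ a) ∧
      ∀ c : ℂ, ρ (algebraMap ℂ (Rring S.F) c) = algebraMap ℂ _ c := by
  obtain ⟨ρ, hρ⟩ := exists_rep0 S χ
  have hker : ∀ x ∈ Ideal.span (relR S.F), ρ x = 0 := by
    have : Ideal.span (relR S.F) ≤ RingHom.ker ρ.toRingHom := by
      rw [Ideal.span_le]
      rintro x ((⟨a, b, c, hab, hc, rfl⟩ | ⟨a, b, hab, rfl⟩) | ⟨z, hz, rfl⟩)
      · change ρ _ = 0
        rw [map_sub, map_mul, hρ, hρ, hρ, sub_eq_zero]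
        refine Vmod_ext fun w => ?_
        rw [Module.End.mul_apply, opA_opA, opA_bv]
        have h1 : CC3 S.F (intPt a) (intPt b) (pt χ w) ↔ CC S.F χ c w := by
          rw [cc3_iff', CC, hc, intPt_add]
          simp [hab]
        have h2 : addP a (addP b w) = addP c w := by
          apply Subtype.ext
          simp only [addP, hc, add_assoc]
        rw [h2]; split_ifs <;> tauto
      · change ρ _ = 0
        rw [map_mul, hρ, hρ]
        refine Vmod_ext fun w => ?_
        rw [Module.End.mul_apply, opA_opA, if_neg, LinearMap.zero_apply]
        rw [cc3_iff']
        tauto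
      · change ρ _ = 0
        rw [map_sub, hρ, map_one, sub_eq_zero]
        refine Vmod_ext fun w => ?_
        rw [opA_bv, if_pos, Module.End.one_apply]
        · congr 1
          apply Subtype.ext
          simp only [addP, hz, zero_add]
        · obtain ⟨I, hI, h⟩ := exists_cone S w.2
          refine ⟨I, hI, ?_, h⟩
          rw [hz, intPt_zero]
          exact zero_mem_realCone _ _
    intro x hx
    exact this hx
  refine ⟨Ideal.Quotient.lift _ ρ.toRingHom hker, fun a => ?_, fun c => ?_⟩
  · exact hρ a
  · exact ρ.commutes c

noncomputable def rep (S : GKZSetting d k) (χ : Fin d → ℝ) :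
    Rring S.F →+* Module.End ℂ (Vmod S χ) := (exists_rep S χ).choose

noncomputable instance instModV (S : GKZSetting d k) (χ : Fin d → ℝ) :
    Module (Rring S.F) (Vmod S χ) := Module.compHom _ (rep S χ)

lemma smul_eq_rep (S : GKZSetting d k) (χ : Fin d → ℝ) (r : Rring S.F) (x : Vmod S χ) :
    r • x = rep S χ r x := rfl

open Classical in
lemma Rgen_smul_bv (S : GKZSetting d k) (χ : Fin d → ℝ) (a : ↥(latticeK S.F.v)) (w) :
    Rgen S.F a • bv S χ w = if CC S.F χ a w then bv S χ (addP a w) else 0 := by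
  rw [smul_eq_rep, rep, (exists_rep S χ).choose_spec.1, opA_bv]

instance (S : GKZSetting d k) (χ : Fin d → ℝ) : IsScalarTower ℂ (Rring S.F) (Vmod S χ) := by
  refine ⟨fun c r x => ?_⟩
  change rep S χ (c • r) x = c • rep S χ r x
  have h0 : c • r = algebraMap ℂ (Rring S.F) c * r := Algebra.smul_def c r
  rw [h0, map_mul]
  have : rep S χ (algebraMap ℂ (Rring S.F) c) = algebraMap ℂ _ c :=
    (exists_rep S χ).choose_spec.2 c
  rw [this]
  rfl

/-! ### Spanning sets -/

lemma latticeK_add {v : Fin k → Fin d → ℤ} {a b : Fin d → ℤ} (ha : a ∈ latticeK v)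
    (hb : b ∈ latticeK v) : a + b ∈ latticeK v := by
  change intPt (a + b) ∈ Kcone v
  rw [intPt_add]
  exact Kcone_add ha hb

lemma latticeK_zero (v : Fin k → Fin d → ℤ) : (0 : Fin d → ℤ) ∈ latticeK v := by
  change intPt (0 : Fin d → ℤ) ∈ Kcone v
  rw [intPt_zero]
  exact realCone_subset_Kcone v ∅ (zero_mem_realCone _ _)

lemma Rgen_mul (F : StackyFan d k) (a b c : ↥(latticeK F.v))
    (h : commonCone F (intPt a) (intPt b)) (hc : (c : Fin d → ℤ) = a + b) :
    Rgen F a * Rgen F b = Rgen F c := by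
  unfold Rgen
  rw [← map_mul, Ideal.Quotient.eq]
  exact Ideal.subset_span (Or.inl (Or.inl ⟨a, b, c, h, hc, rfl⟩))

lemma Rgen_mul_zero (F : StackyFan d k) (a b : ↥(latticeK F.v))
    (h : ¬ commonCone F (intPt a) (intPt b)) : Rgen F a * Rgen F b = 0 := by
  unfold Rgen
  rw [← map_mul, Ideal.Quotient.eq_zero_iff_mem]
  exact Ideal.subset_span (Or.inl (Or.inr ⟨a, b, h, rfl⟩))

lemma Rgen_zero (F : StackyFan d k) (z : ↥(latticeK F.v)) (hz : (z : Fin d → ℤ) = 0) :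
    Rgen F z = 1 := by
  unfold Rgen
  rw [← map_one (Ideal.Quotient.mk _), Ideal.Quotient.eq]
  exact Ideal.subset_span (Or.inr ⟨z, hz, rfl⟩)

lemma Rring_span (F : StackyFan d k) (r : Rring F) :
    r ∈ Submodule.span ℂ (Set.range (Rgen F)) := by
  obtain ⟨p, rfl⟩ := Ideal.Quotient.mk_surjective r
  induction p using MvPolynomial.induction_on with
  | C c =>
    have : Ideal.Quotient.mk (Ideal.span (relR F)) (MvPolynomial.C c) =
        c • Rgen F ⟨0, latticeK_zero _⟩ := by
      rw [Rgen_zero F _ rfl, ← Algebra.algebraMap_eq_smul_one]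
      rfl
    rw [this]
    exact Submodule.smul_mem _ _ (Submodule.subset_span ⟨_, rfl⟩)
  | add p q hp hq => rw [map_add]; exact Submodule.add_mem _ hp hq
  | mul_X p a hp =>
    rw [map_mul]
    change _ * Rgen F a ∈ _
    generalize Ideal.Quotient.mk (Ideal.span (relR F)) p = r at hp ⊢
    induction hp using Submodule.span_induction with
    | mem x hx =>
      obtain ⟨b, rfl⟩ := hx
      by_cases h : commonCone F (intPt b) (intPt a)
      · rw [Rgen_mul F b a ⟨b + a, latticeK_add b.2 a.2⟩ h rfl]
        exact Submodule.subset_span ⟨_, rfl⟩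
      · rw [Rgen_mul_zero F b a h]; exact Submodule.zero_mem _
    | zero => rw [zero_mul]; exact Submodule.zero_mem _
    | add x y _ _ hx hy => rw [add_mul]; exact Submodule.add_mem _ hx hy
    | smul c x _ hx => rw [smul_mul_assoc]; exact Submodule.smul_mem _ _ hx

lemma Rgen_smul_Mgen (F : StackyFan d k) (χ : Fin d → ℝ) (a : ↥(latticeK F.v)) (w w' : ↥(Ppts F.v χ))
    (h : CC F χ a w) (hw : (w' : Fin d → ℤ) = a + w) :
    Rgen F a • Mgen F χ w = Mgen F χ w' := by
  unfold Mgen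
  rw [← Submodule.Quotient.mk_smul, Submodule.Quotient.eq]
  refine Submodule.subset_span (Or.inl ⟨a, w, w', h, hw, ?_⟩)
  rw [Finsupp.smul_single, smul_eq_mul, mul_one]

lemma Rgen_smul_Mgen_zero (F : StackyFan d k) (χ : Fin d → ℝ) (a : ↥(latticeK F.v)) (w : ↥(Ppts F.v χ))
    (h : ¬ CC F χ a w) : Rgen F a • Mgen F χ w = 0 := by
  unfold Mgen
  rw [← Submodule.Quotient.mk_smul, Submodule.Quotient.mk_eq_zero]
  refine Submodule.subset_span (Or.inr ⟨a, w, h, ?_⟩)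
  rw [Finsupp.smul_single, smul_eq_mul, mul_one]

lemma Mmod_span (F : StackyFan d k) (χ : Fin d → ℝ) (x : Mmod F χ) :
    x ∈ Submodule.span ℂ (Set.range (Mgen F χ)) := by
  obtain ⟨y, rfl⟩ := Submodule.Quotient.mk_surjective _ x
  induction y using Finsupp.induction_linear with
  | zero => exact Submodule.zero_mem _
  | add p q hp hq => rw [Submodule.Quotient.mk_add]; exact Submodule.add_mem _ hp hq
  | single w r =>
    have : (Submodule.Quotient.mk (Finsupp.single w r) : Mmod F χ) = r • Mgen F χ w := by
      unfold Mgen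
      rw [← Submodule.Quotient.mk_smul, Finsupp.smul_single, smul_eq_mul, mul_one]
    rw [this]
    clear this
    have hr := Rring_span F r
    induction hr using Submodule.span_induction with
    | mem x hx =>
      obtain ⟨b, rfl⟩ := hx
      by_cases h : CC F χ b w
      · rw [Rgen_smul_Mgen F χ b w (addP b w) h rfl]
        exact Submodule.subset_span ⟨_, rfl⟩
      · rw [Rgen_smul_Mgen_zero F χ b w h]; exact Submodule.zero_mem _
    | zero => rw [zero_smul (Rring F) (Mgen F χ w)]; exact Submodule.zero_mem _
    | add x y _ _ hx hy =>
      rw [add_smul]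
      exact Submodule.add_mem _ hx hy
    | smul c x _ hx =>
      rw [smul_assoc]
      exact Submodule.smul_mem _ _ hx

end GKZpaper

namespace GKZpaper

variable {d k : ℕ}

/-! ### Identification of the modules with the models -/

lemma single_span {α : Type*} (x : α →₀ ℂ) :
    x ∈ Submodule.span ℂ (Set.range fun w : α => (Finsupp.single w (1 : ℂ) : α →₀ ℂ)) := by
  induction x using Finsupp.induction_linear with
  | zero => exact Submodule.zero_mem _
  | add x y hx hy => exact Submodule.add_mem _ hx hy
  | single w c =>
    have : (Finsupp.single w c : α →₀ ℂ) = c • Finsupp.single w 1 := by simp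
    rw [this]
    exact Submodule.smul_mem _ _ (Submodule.subset_span ⟨w, rfl⟩)

lemma single_span_image {α : Type*} (U : Set α) (x : α →₀ ℂ) :
    x ∈ Submodule.span ℂ ((fun w : α => (Finsupp.single w (1 : ℂ) : α →₀ ℂ)) '' U) ↔
      ∀ w, Finsupp.lapply (R := ℂ) w x ≠ 0 → w ∈ U := by
  rw [← Finsupp.supported_eq_span_single, Finsupp.mem_supported]
  constructor
  · intro h w hw
    exact h (Finsupp.mem_support_iff.mpr hw)
  · intro h w hw
    exact h w (Finsupp.mem_support_iff.mp hw)

lemma bv_span {S : GKZSetting d k} {χ : Fin d → ℝ} (x : Vmod S χ) :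
    x ∈ Submodule.span ℂ (Set.range (bv S χ)) := single_span (α := ↥(Ppts S.F.v χ)) x

/-- Coefficients. -/
noncomputable def cf (S : GKZSetting d k) (χ : Fin d → ℝ) (w : ↥(Ppts S.F.v χ)) :
    Vmod S χ →ₗ[ℂ] ℂ := Finsupp.lapply (R := ℂ) (M := ℂ) w

lemma exists_equivM (S : GKZSetting d k) (χ : Fin d → ℝ) :
    ∃ Φ : Mmod S.F χ ≃ₗ[Rring S.F] Vmod S χ, ∀ w, Φ (Mgen S.F χ w) = bv S χ w := by
  let φ0 : MfreeR S.F χ →ₗ[Rring S.F] Vmod S χ := Finsupp.linearCombination _ (bv S χ)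
  have hφ0 : ∀ w r, φ0 (Finsupp.single w r) = r • bv S χ w := fun w r => by
    simp only [φ0, Finsupp.linearCombination_single]
  have hker : Submodule.span (Rring S.F) (relM S.F χ) ≤ LinearMap.ker φ0 := by
    rw [Submodule.span_le]
    rintro x (⟨a, w, w', hc, hw, rfl⟩ | ⟨a, w, hc, rfl⟩)
    · change φ0 _ = 0
      rw [map_sub, hφ0, hφ0, one_smul, Rgen_smul_bv, if_pos, sub_eq_zero]
      · congr 1
        exact Subtype.ext hw.symm
      · exact hc
    · change φ0 _ = 0
      rw [hφ0, Rgen_smul_bv, if_neg]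
      exact hc
  let Φ : Mmod S.F χ →ₗ[Rring S.F] Vmod S χ := Submodule.liftQ _ φ0 hker
  have hΦ : ∀ w, Φ (Mgen S.F χ w) = bv S χ w := by
    intro w
    change φ0 (Finsupp.single w 1) = _
    rw [hφ0, one_smul]
  have hΦc : ∀ (c : ℂ) x, Φ (c • x) = c • Φ x := by
    intro c x
    rw [← algebraMap_smul (Rring S.F) c x, map_smul, algebraMap_smul]
  let Ψ : Vmod S χ →ₗ[ℂ] Mmod S.F χ :=
    Finsupp.linearCombination ℂ (Mgen S.F χ)
  have hΨ : ∀ w, Ψ (bv S χ w) = Mgen S.F χ w := by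
    intro w
    change Finsupp.linearCombination ℂ (Mgen S.F χ) (Finsupp.single w 1) = _
    rw [Finsupp.linearCombination_single, one_smul]
  have h1 : ∀ x, Ψ (Φ x) = x := by
    intro x
    have hx := Mmod_span S.F χ x
    induction hx using Submodule.span_induction with
    | mem x hx => obtain ⟨w, rfl⟩ := hx; rw [hΦ, hΨ]
    | zero => rw [map_zero, map_zero]
    | add x y _ _ hx hy => rw [map_add, map_add, hx, hy]
    | smul c x _ hx => rw [hΦc, map_smul, hx]
  have h2 : ∀ y, Φ (Ψ y) = y := by
    intro x
    have hx := bv_span x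
    induction hx using Submodule.span_induction with
    | mem x hx => obtain ⟨w, rfl⟩ := hx; rw [hΨ, hΦ]
    | zero => rw [map_zero, map_zero]
    | add x y _ _ hx hy => rw [map_add, map_add, hx, hy]
    | smul c x _ hx => rw [map_smul, hΦc, hx]
  exact ⟨LinearEquiv.ofBijective Φ ⟨Function.LeftInverse.injective h1,
    Function.RightInverse.surjective h2⟩, hΦ⟩

lemma pt_zero (n : Fin d → ℤ) : pt 0 n = intPt n := by
  ext j; simp [pt, intPt]

lemma latticeK_eq (v : Fin k → Fin d → ℤ) : Ppts v 0 = latticeK v := by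
  ext n
  change pt 0 n ∈ Kcone v ↔ intPt n ∈ Kcone v
  rw [pt_zero]

/-- The origin in the model of the ring. -/
def orig (v : Fin k → Fin d → ℤ) : ↥(Ppts v (0 : Fin d → ℝ)) :=
  ⟨0, by rw [latticeK_eq]; exact latticeK_zero v⟩

lemma Rgen_smul_orig (S : GKZSetting d k) (w : ↥(Ppts S.F.v (0 : Fin d → ℝ))) :
    Rgen S.F ⟨w, by rw [← latticeK_eq]; exact w.2⟩ • bv S 0 (orig S.F.v) = bv S 0 w := by
  rw [Rgen_smul_bv, if_pos]
  · congr 1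
    apply Subtype.ext
    simp [addP, orig]
  · obtain ⟨I, hI, h⟩ := exists_cone S w.2
    refine ⟨I, hI, ?_, ?_⟩
    · change pt 0 _ ∈ _ at h
      rwa [pt_zero] at h
    · rw [pt_zero]
      change intPt (0 : Fin d → ℤ) ∈ _
      rw [intPt_zero]
      exact zero_mem_realCone _ _

lemma exists_equivR (S : GKZSetting d k) :
    ∃ Φ : Rring S.F ≃ₗ[Rring S.F] Vmod S 0, ∀ w : ↥(Ppts S.F.v (0 : Fin d → ℝ)),
      Φ (Rgen S.F ⟨w, by rw [← latticeK_eq]; exact w.2⟩) = bv S 0 w := by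
  let Φ : Rring S.F →ₗ[Rring S.F] Vmod S 0 := LinearMap.toSpanSingleton _ _ (bv S 0 (orig S.F.v))
  have hΦ : ∀ w : ↥(Ppts S.F.v (0 : Fin d → ℝ)),
      Φ (Rgen S.F ⟨w, by rw [← latticeK_eq]; exact w.2⟩) = bv S 0 w := by
    intro w
    rw [LinearMap.toSpanSingleton_apply]
    exact Rgen_smul_orig S w
  have hΦc : ∀ (c : ℂ) x, Φ (c • x) = c • Φ x := by
    intro c x
    rw [← algebraMap_smul (Rring S.F) c x, map_smul, algebraMap_smul]
  let Ψ : Vmod S 0 →ₗ[ℂ] Rring S.F :=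
    Finsupp.linearCombination ℂ (fun w : ↥(Ppts S.F.v (0 : Fin d → ℝ)) =>
      Rgen S.F ⟨w, by rw [← latticeK_eq]; exact w.2⟩)
  have hΨ : ∀ w : ↥(Ppts S.F.v (0 : Fin d → ℝ)),
      Ψ (bv S 0 w) = Rgen S.F ⟨w, by rw [← latticeK_eq]; exact w.2⟩ := by
    intro w
    change Finsupp.linearCombination ℂ _ (Finsupp.single w 1) = _
    rw [Finsupp.linearCombination_single, one_smul]
  have h1 : ∀ x, Ψ (Φ x) = x := by
    intro x
    have hx := Rring_span S.F x
    induction hx using Submodule.span_induction with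
    | mem x hx =>
      obtain ⟨w, rfl⟩ := hx
      have := hΦ ⟨w, by rw [latticeK_eq]; exact w.2⟩
      exact (congrArg Ψ this).trans (hΨ _)
    | zero => rw [map_zero, map_zero]
    | add x y _ _ hx hy => rw [map_add, map_add, hx, hy]
    | smul c x _ hx => rw [hΦc, map_smul, hx]
  have h2 : ∀ y, Φ (Ψ y) = y := by
    intro x
    have hx := bv_span x
    induction hx using Submodule.span_induction with
    | mem x hx => obtain ⟨w, rfl⟩ := hx; rw [hΨ, hΦ]
    | zero => rw [map_zero, map_zero]
    | add x y _ _ hx hy => rw [map_add, map_add, hx, hy]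
    | smul c x _ hx => rw [map_smul, hΦc, hx]
  exact ⟨LinearEquiv.ofBijective Φ ⟨Function.LeftInverse.injective h1,
    Function.RightInverse.surjective h2⟩, hΦ⟩

/-! ### Monomial submodules -/

/-- A set of basis points stable under the action. -/
def Stable (S : GKZSetting d k) (χ : Fin d → ℝ) (U : Set ↥(Ppts S.F.v χ)) : Prop :=
  ∀ a w, w ∈ U → CC S.F χ a w → addP a w ∈ U

/-- The complex subspace spanned by basis vectors. -/
noncomputable def subC (S : GKZSetting d k) (χ : Fin d → ℝ) (U : Set ↥(Ppts S.F.v χ)) :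
    Submodule ℂ (Vmod S χ) := Submodule.span ℂ (bv S χ '' U)

lemma subC_smul {S : GKZSetting d k} {χ : Fin d → ℝ} {U : Set ↥(Ppts S.F.v χ)}
    (hU : Stable S χ U) (r : Rring S.F) {x : Vmod S χ} (hx : x ∈ subC S χ U) :
    r • x ∈ subC S χ U := by
  have hr := Rring_span S.F r
  induction hr using Submodule.span_induction with
  | mem r hr =>
    obtain ⟨a, rfl⟩ := hr
    unfold subC at hx
    induction hx using Submodule.span_induction with
    | mem x hx =>
      obtain ⟨w, hw, rfl⟩ := hx
      rw [Rgen_smul_bv]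
      split_ifs with h
      · exact Submodule.subset_span ⟨_, hU a w hw h, rfl⟩
      · exact Submodule.zero_mem _
    | zero => rw [smul_zero]; exact Submodule.zero_mem _
    | add x y _ _ hx hy => rw [smul_add]; exact Submodule.add_mem _ hx hy
    | smul c x _ hx => rw [smul_comm]; exact Submodule.smul_mem _ _ hx
  | zero => rw [zero_smul (Rring S.F) x]; exact Submodule.zero_mem _
  | add x y _ _ hx hy => rw [add_smul]; exact Submodule.add_mem _ hx hy
  | smul c x _ hx => rw [smul_assoc]; exact Submodule.smul_mem _ _ hx

/-- The monomial submodule attached to a stable set. -/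
noncomputable def subU (S : GKZSetting d k) (χ : Fin d → ℝ) (U : Set ↥(Ppts S.F.v χ)) (hU : Stable S χ U) :
    Submodule (Rring S.F) (Vmod S χ) where
  carrier := subC S χ U
  add_mem' := (subC S χ U).add_mem
  zero_mem' := (subC S χ U).zero_mem
  smul_mem' := fun r _ hx => subC_smul hU r hx

lemma mem_subU {S : GKZSetting d k} {χ : Fin d → ℝ} {U : Set ↥(Ppts S.F.v χ)}
    {hU : Stable S χ U} {x : Vmod S χ} : x ∈ subU S χ U hU ↔ x ∈ subC S χ U := Iff.rfl

lemma mem_subC {S : GKZSetting d k} {χ : Fin d → ℝ} {U : Set ↥(Ppts S.F.v χ)}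
    {x : Vmod S χ} : x ∈ subC S χ U ↔ ∀ w, cf S χ w x ≠ 0 → w ∈ U :=
  single_span_image (α := ↥(Ppts S.F.v χ)) U x

lemma subC_univ {S : GKZSetting d k} {χ : Fin d → ℝ} (x : Vmod S χ) :
    x ∈ subC S χ Set.univ := mem_subC.mpr fun _ _ => trivial

end GKZpaper

namespace GKZpaper

variable {d k : ℕ}

/-! ### Box decomposition of a cell -/

open Classical in
/-- Floor or shifted ceiling. -/
noncomputable def mf (P : Prop) (x : ℝ) : ℤ := if P then ⌊x⌋ else ⌈x⌉ - 1

lemma mf_add (P : Prop) (x : ℝ) (t : ℤ) : mf P (t + x) = mf P x + t := by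
  unfold mf
  split_ifs
  · rw [add_comm, Int.floor_add_intCast]
  · rw [add_comm, Int.ceil_add_intCast]; ring

lemma mf_nonneg (P : Prop) (x : ℝ) : 0 ≤ mf P x ↔ 0 < x ∨ x = 0 ∧ P := by
  unfold mf
  split_ifs with h
  · rw [Int.floor_nonneg]
    simp only [h, and_true]
    rw [le_iff_lt_or_eq]
    simp only [eq_comm]
  · simp only [h, and_false, or_false]
    rw [← Int.ceil_pos]
    omega

variable (S : GKZSetting d k) (χ ξ p : Fin d → ℝ) (s : FullCone S.F)

/-- The integral coordinates in a cell. -/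
noncomputable def mm (n : Fin d → ℤ) (a : Fin d) : ℤ :=
  mf (0 < co S.F s a ξ ∨ co S.F s a ξ = 0 ∧ 0 < co S.F s a p) (co S.F s a (pt χ n))

lemma cell_iff (n : Fin d → ℤ) : Cell S.F ξ p s (pt χ n) ↔ ∀ a, 0 ≤ mm S χ ξ p s n a := by
  unfold Cell mm
  simp only [mf_nonneg]

/-- Integral combinations of the generators of a cone. -/
noncomputable def comb (μ : Fin d → ℤ) : Fin d → ℤ := ∑ a, μ a • S.F.v ((chart S.F s).e a)

lemma intPt_sum {ι : Type*} (t : Finset ι) (f : ι → Fin d → ℤ) :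
    intPt (∑ i ∈ t, f i) = ∑ i ∈ t, intPt (f i) := by
  ext j; simp [intPt]

lemma intPt_zsmul (c : ℤ) (n : Fin d → ℤ) : intPt (c • n) = (c : ℝ) • intPt n := by
  ext j; simp [intPt]

lemma co_comb (μ : Fin d → ℤ) (a : Fin d) : co S.F s a (intPt (comb S s μ)) = μ a := by
  unfold comb
  rw [intPt_sum, map_sum]
  simp only [intPt_zsmul, map_smul, co_gen]
  simp

lemma mm_comb (μ : Fin d → ℤ) (n : Fin d → ℤ) (a : Fin d) :
    mm S χ ξ p s (comb S s μ + n) a = mm S χ ξ p s n a + μ a := by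
  unfold mm
  rw [pt_add, map_add, co_comb, mf_add]

lemma comb_single (a : Fin d) : comb S s (Pi.single a 1) = S.F.v ((chart S.F s).e a) := by
  unfold comb
  rw [Finset.sum_eq_single a]
  · simp
  · intro b _ hb
    simp [Pi.single_eq_of_ne hb]
  · simp

lemma comb_add (μ ν : Fin d → ℤ) : comb S s (μ + ν) = comb S s μ + comb S s ν := by
  simp [comb, add_smul, Finset.sum_add_distrib]

lemma comb_neg (μ : Fin d → ℤ) : comb S s (-μ) = - comb S s μ := by
  simp [comb]

/-- The box points. -/
def BB := {n : Fin d → ℤ // ∀ a, mm S χ ξ p s n a = 0}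

/-- The box part of a lattice point. -/
noncomputable def bx (n : Fin d → ℤ) : BB S χ ξ p s :=
  ⟨comb S s (-(mm S χ ξ p s n)) + n, fun a => by rw [mm_comb]; simp⟩

/-- The exponent vector. -/
noncomputable def ex (n : Fin d → ℤ) : Fin d →₀ ℕ :=
  Finsupp.equivFunOnFinite.symm fun a => (mm S χ ξ p s n a).toNat

lemma ex_apply (n : Fin d → ℤ) (a : Fin d) : ex S χ ξ p s n a = (mm S χ ξ p s n a).toNat := rfl

/-- The lattice point with given box part and exponent. -/
noncomputable def lp (b : BB S χ ξ p s) (m : Fin d →₀ ℕ) : Fin d → ℤ := comb S s (fun a => (m a : ℤ)) + b.1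

lemma mm_lp (b : BB S χ ξ p s) (m : Fin d →₀ ℕ) (a : Fin d) :
    mm S χ ξ p s (lp S χ ξ p s b m) a = m a := by
  unfold lp
  rw [mm_comb, b.2, zero_add]

lemma cell_lp (b : BB S χ ξ p s) (m : Fin d →₀ ℕ) :
    Cell S.F ξ p s (pt χ (lp S χ ξ p s b m)) := by
  rw [cell_iff]
  intro a
  rw [mm_lp]
  positivity

lemma bx_lp (b : BB S χ ξ p s) (m : Fin d →₀ ℕ) : bx S χ ξ p s (lp S χ ξ p s b m) = b := by
  apply Subtype.ext
  unfold bx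
  have : mm S χ ξ p s (lp S χ ξ p s b m) = fun a => (m a : ℤ) := by
    ext a; exact mm_lp S χ ξ p s b m a
  simp only [this]
  rw [comb_neg, lp, neg_add_cancel_left]

lemma ex_lp (b : BB S χ ξ p s) (m : Fin d →₀ ℕ) : ex S χ ξ p s (lp S χ ξ p s b m) = m := by
  ext a
  rw [ex_apply, mm_lp, Int.toNat_natCast]

lemma lp_bx {n : Fin d → ℤ} (h : Cell S.F ξ p s (pt χ n)) :
    lp S χ ξ p s (bx S χ ξ p s n) (ex S χ ξ p s n) = n := by
  rw [cell_iff] at h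
  have : (fun a => ((ex S χ ξ p s n a : ℕ) : ℤ)) = mm S χ ξ p s n := by
    ext a; rw [ex_apply, Int.toNat_of_nonneg (h a)]
  unfold lp
  rw [this, bx]
  simp only
  rw [comb_neg, add_neg_cancel_left]

lemma cell_mem_Ppts {n : Fin d → ℤ} (h : Cell S.F ξ p s (pt χ n)) : n ∈ Ppts S.F.v χ :=
  realCone_subset_Kcone _ _ h.mem

/-- The lattice point with given box part and exponent, as a basis index. -/
noncomputable def lpP (b : BB S χ ξ p s) (m : Fin d →₀ ℕ) : ↥(Ppts S.F.v χ) :=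
  ⟨lp S χ ξ p s b m, cell_mem_Ppts S χ ξ p s (cell_lp S χ ξ p s b m)⟩

open Classical in
/-- The projection to the cell, on basis vectors. -/
noncomputable def fb (n : Fin d → ℤ) : BB S χ ξ p s →₀ MvPolynomial (Fin d) ℂ :=
  if Cell S.F ξ p s (pt χ n) then
    Finsupp.single (bx S χ ξ p s n) (MvPolynomial.monomial (ex S χ ξ p s n) 1) else 0

/-- The projection to the cell. -/
noncomputable def fcell : Vmod S χ →ₗ[ℂ] (BB S χ ξ p s →₀ MvPolynomial (Fin d) ℂ) :=
  Finsupp.linearCombination ℂ (fun w : ↥(Ppts S.F.v χ) => fb S χ ξ p s w)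

lemma fcell_bv (w : ↥(Ppts S.F.v χ)) : fcell S χ ξ p s (bv S χ w) = fb S χ ξ p s w := by
  change Finsupp.linearCombination ℂ (fun w : ↥(Ppts S.F.v χ) => fb S χ ξ p s w)
    (Finsupp.single w 1) = _
  rw [Finsupp.linearCombination_single, one_smul]

lemma fb_lp (b : BB S χ ξ p s) (m : Fin d →₀ ℕ) : fb S χ ξ p s (lp S χ ξ p s b m) =
    Finsupp.single b (MvPolynomial.monomial m 1) := by
  unfold fb
  rw [if_pos (cell_lp S χ ξ p s b m), bx_lp, ex_lp]

open Classical in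
lemma cf_bv (w w' : ↥(Ppts S.F.v χ)) : cf S χ w (bv S χ w') = if w' = w then 1 else 0 := by
  change (Finsupp.single w' (1 : ℂ) : ↥(Ppts S.F.v χ) →₀ ℂ) w = _
  rw [Finsupp.single_apply]

lemma coeff_fcell (b : BB S χ ξ p s) (m : Fin d →₀ ℕ) (x : Vmod S χ) :
    MvPolynomial.coeff m (fcell S χ ξ p s x b) = cf S χ (lpP S χ ξ p s b m) x := by
  classical
  have hx := bv_span x
  induction hx using Submodule.span_induction with
  | mem x hx =>
    obtain ⟨w, rfl⟩ := hx
    rw [fcell_bv, cf_bv]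
    by_cases hw : Cell S.F ξ p s (pt χ w)
    · have h := lp_bx S χ ξ p s hw
      have h2 : (w = lpP S χ ξ p s b m) ↔ (bx S χ ξ p s w = b ∧ ex S χ ξ p s w = m) := by
        constructor
        · rintro rfl
          exact ⟨bx_lp S χ ξ p s b m, ex_lp S χ ξ p s b m⟩
        · rintro ⟨h1, h2⟩
          apply Subtype.ext
          rw [h1, h2] at h
          exact h.symm
      unfold fb
      rw [if_pos hw, Finsupp.single_apply]
      by_cases hb : bx S χ ξ p s w = b
      · rw [if_pos hb, MvPolynomial.coeff_monomial]
        simp only [h2, hb, true_and]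
      · rw [if_neg hb, MvPolynomial.coeff_zero, if_neg]
        tauto
    · unfold fb
      rw [if_neg hw, if_neg]
      · simp
      · rintro rfl
        exact hw (cell_lp S χ ξ p s b m)
  | zero => simp
  | add x y _ _ hx hy => simp only [map_add, Finsupp.add_apply, MvPolynomial.coeff_add, hx, hy]
  | smul c x _ hx =>
    simp only [map_smul, Finsupp.smul_apply, MvPolynomial.coeff_smul, hx]

/-- The points of a cell. -/
def cellPts : Set ↥(Ppts S.F.v χ) := {w | Cell S.F ξ p s (pt χ w)}

lemma fcell_eq_zero (x : Vmod S χ) : fcell S χ ξ p s x = 0 ↔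
    ∀ w, cf S χ w x ≠ 0 → w ∉ cellPts S χ ξ p s := by
  constructor
  · intro h w hw hc
    apply hw
    have h2 := coeff_fcell S χ ξ p s (bx S χ ξ p s w) (ex S χ ξ p s w) x
    have h3 : lpP S χ ξ p s (bx S χ ξ p s w) (ex S χ ξ p s w) = w :=
      Subtype.ext (lp_bx S χ ξ p s hc)
    rw [h3] at h2
    rw [← h2, h]
    simp
  · intro h
    ext b m
    rw [coeff_fcell]
    by_contra hne
    exact h _ hne (cell_lp S χ ξ p s b m)

lemma fcell_surj (y : BB S χ ξ p s →₀ MvPolynomial (Fin d) ℂ) :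
    ∃ x ∈ subC S χ (cellPts S χ ξ p s), fcell S χ ξ p s x = y := by
  induction y using Finsupp.induction_linear with
  | zero => exact ⟨0, Submodule.zero_mem _, map_zero _⟩
  | add y y' hy hy' =>
    obtain ⟨x, hx, rfl⟩ := hy
    obtain ⟨x', hx', rfl⟩ := hy'
    exact ⟨x + x', Submodule.add_mem _ hx hx', map_add _ _ _⟩
  | single b q =>
    induction q using MvPolynomial.induction_on' with
    | monomial m c =>
      refine ⟨c • bv S χ (lpP S χ ξ p s b m), Submodule.smul_mem _ _
        (Submodule.subset_span ⟨_, cell_lp S χ ξ p s b m, rfl⟩), ?_⟩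
      rw [map_smul, fcell_bv]
      change c • fb S χ ξ p s (lp S χ ξ p s b m) = _
      rw [fb_lp, Finsupp.smul_single, MvPolynomial.smul_monomial, smul_eq_mul, mul_one]
    | add y y' hy hy' =>
      obtain ⟨x, hx, h⟩ := hy
      obtain ⟨x', hx', h'⟩ := hy'
      exact ⟨x + x', Submodule.add_mem _ hx hx', by rw [map_add, h, h', Finsupp.single_add]⟩

/-! ### Action of the linear forms -/

/-- The element `[vᵢ]`. -/
noncomputable def rv (i : Fin k) : Rring S.F := Rgen S.F ⟨S.F.v i, v_mem_latticeK S.F.v i⟩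

open Classical in
lemma Zelt_smul (g : (Fin d → ℤ) →ₗ[ℤ] ℤ) (x : Vmod S χ) :
    Zelt S.F g • x = ∑ i, if i ∈ raysIdx S.F then ((g (S.F.v i) : ℤ) : ℂ) • (rv S i • x) else 0 := by
  unfold Zelt
  rw [Finset.sum_smul]
  refine Finset.sum_congr rfl fun i _ => ?_
  split_ifs
  · rw [mul_smul, algebraMap_smul]; rfl
  · exact zero_smul (Rring S.F) x

lemma fcell_ray_in (w : ↥(Ppts S.F.v χ)) (hw : Cell S.F ξ p s (pt χ w)) (a : Fin d) :
    fcell S χ ξ p s (rv S ((chart S.F s).e a) • bv S χ w) =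
      (MvPolynomial.X a : MvPolynomial (Fin d) ℂ) • fcell S χ ξ p s (bv S χ w) := by
  have hmem : intPt (S.F.v ((chart S.F s).e a)) ∈ realCone S.F.v s.1 :=
    gen_mem_realCone _ (((chart S.F s).img _).mpr ⟨a, rfl⟩)
  rw [rv, Rgen_smul_bv, if_pos ⟨s.1, s.2.1, hmem, hw.mem⟩, fcell_bv, fcell_bv]
  have hw' := lp_bx S χ ξ p s hw
  set b := bx S χ ξ p s w
  set m := ex S χ ξ p s w
  have h2 : S.F.v ((chart S.F s).e a) + (w : Fin d → ℤ) =
      lp S χ ξ p s b (Finsupp.single a 1 + m) := by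
    rw [← hw', lp, lp, ← comb_single S s a, ← add_assoc, ← comb_add]
    congr 2
    ext a'
    by_cases h : a' = a
    · subst h; simp
    · simp [h]
  change fb S χ ξ p s (S.F.v ((chart S.F s).e a) + (w : Fin d → ℤ)) = _
  rw [h2, ← hw', fb_lp, fb_lp, Finsupp.smul_single, smul_eq_mul, MvPolynomial.X,
    MvPolynomial.monomial_mul, one_mul]

lemma fcell_zero_of_not {w : ↥(Ppts S.F.v χ)} (hw : ¬ Cell S.F ξ p s (pt χ w)) :
    fcell S χ ξ p s (bv S χ w) = 0 := by
  rw [fcell_bv, fb, if_neg hw]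

lemma fcell_ray_out (w : ↥(Ppts S.F.v χ)) (i : Fin k)
    (hi : i ∈ raysIdx S.F) (his : i ∉ s.1) : fcell S χ ξ p s (rv S i • bv S χ w) = 0 := by
  rw [rv, Rgen_smul_bv]
  split_ifs with h
  · apply fcell_zero_of_not
    intro hc
    obtain ⟨I, hI, h1, h2⟩ := h
    have h3 := hc.mem
    have h4 : pt χ (addP ⟨S.F.v i, v_mem_latticeK S.F.v i⟩ w) = intPt (S.F.v i) + pt χ w :=
      pt_add _ _ _
    rw [h4] at h3
    exact ray_notMem S.F s hi his (face S.F hI s.2.1 h1 h2 h3)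
  · exact map_zero _

/-- The coefficient matrix of the linear forms on a cone. -/
noncomputable def Wm (g : Fin d → ((Fin d → ℤ) →ₗ[ℤ] ℤ)) : Matrix (Fin d) (Fin d) ℂ :=
  fun j a => ((g j (S.F.v ((chart S.F s).e a)) : ℤ) : ℂ)

lemma ray_of_mem {i : Fin k} (h : i ∈ s.1) : i ∈ raysIdx S.F :=
  S.F.downClosed _ s.2.1 _ (by simpa using h)

lemma fcell_Z_in (g : Fin d → ((Fin d → ℤ) →ₗ[ℤ] ℤ)) (j : Fin d) (w : ↥(Ppts S.F.v χ))
    (hw : Cell S.F ξ p s (pt χ w)) :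
    fcell S χ ξ p s (Zelt S.F (g j) • bv S χ w) =
      (∑ a, MvPolynomial.C (Wm S s g j a) * MvPolynomial.X a : MvPolynomial (Fin d) ℂ) •
        fcell S χ ξ p s (bv S χ w) := by
  classical
  rw [Zelt_smul, map_sum, Finset.sum_smul]
  symm
  apply Fintype.sum_of_injective (chart S.F s).e (chart S.F s).inj
  · intro i hi
    have his : i ∉ s.1 := fun h => hi (((chart S.F s).img i).mp h)
    split_ifs with h
    · rw [map_smul, fcell_ray_out S χ ξ p s w i h his, smul_zero]
    · exact map_zero _
  · intro a
    have : (chart S.F s).e a ∈ s.1 := ((chart S.F s).img _).mpr ⟨a, rfl⟩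
    rw [if_pos (ray_of_mem S s this), map_smul, fcell_ray_in S χ ξ p s w hw, mul_smul]
    ext b
    simp [Wm, MvPolynomial.smul_eq_C_mul]

lemma fcell_Z_out (g : (Fin d → ℤ) →ₗ[ℤ] ℤ) (w : ↥(Ppts S.F.v χ))
    (h : ∀ x, commonCone S.F x (pt χ w) → ¬ Cell S.F ξ p s (x + pt χ w)) :
    fcell S χ ξ p s (Zelt S.F g • bv S χ w) = 0 := by
  classical
  rw [Zelt_smul, map_sum]
  refine Finset.sum_eq_zero fun i _ => ?_
  split_ifs with hi
  · rw [map_smul, rv, Rgen_smul_bv]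
    split_ifs with hc
    · rw [fcell_zero_of_not, smul_zero]
      have h4 : pt χ (addP ⟨S.F.v i, v_mem_latticeK S.F.v i⟩ w) = intPt (S.F.v i) + pt χ w :=
        pt_add _ _ _
      rw [h4]
      exact h _ hc
    · rw [map_zero, smul_zero]
  · exact map_zero _

end GKZpaper

namespace GKZpaper
open RingTheory.Sequence

variable {d k : ℕ}

lemma Wm_det (S : GKZSetting d k) (s : FullCone S.F) (g : Fin d → ((Fin d → ℤ) →ₗ[ℤ] ℤ))
    (hg : Submodule.span ℤ (Set.range g) = ⊤) : IsUnit (Wm S s g).det := by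
  let Wz : Matrix (Fin d) (Fin d) ℤ := fun j a => g j (S.F.v ((chart S.F s).e a))
  have h1 : Wm S s g = (Int.castRingHom ℂ).mapMatrix Wz := rfl
  rw [h1, ← RingHom.map_det, isUnit_iff_ne_zero]
  simp only [eq_intCast, ne_eq, Int.cast_eq_zero]
  intro h0
  obtain ⟨u, hu, hWu⟩ := Matrix.exists_mulVec_eq_zero_iff.mpr h0
  have h2 : ∀ h : (Fin d → ℤ) →ₗ[ℤ] ℤ, h (comb S s u) = 0 := by
    intro h
    have hh : h ∈ Submodule.span ℤ (Set.range g) := by rw [hg]; trivial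
    induction hh using Submodule.span_induction with
    | mem x hx =>
      obtain ⟨j, rfl⟩ := hx
      have := congrFun hWu j
      simp only [Matrix.mulVec, dotProduct, Pi.zero_apply, Wz] at this
      rw [comb, map_sum, ← this]
      refine Finset.sum_congr rfl fun a _ => ?_
      rw [map_smul, smul_eq_mul, mul_comm]
    | zero => rfl
    | add x y _ _ hx hy => rw [LinearMap.add_apply, hx, hy, add_zero]
    | smul c x _ hx => rw [LinearMap.smul_apply, hx, smul_zero]
  have h3 : comb S s u = 0 := by
    ext l
    exact h2 (LinearMap.proj l)
  apply hu
  ext a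
  have h4 := co_comb S s u a
  rw [h3, intPt_zero, map_zero] at h4
  exact_mod_cast h4.symm

lemma shadow_add {F : StackyFan d k} {ξ x w : Fin d → ℝ} (h : ShadowAt F ξ w)
    (hx : x ∈ Kcone F.v) : ShadowAt F ξ (x + w) := by
  obtain ⟨e, he, h⟩ := h
  refine ⟨e, he, fun ε h1 h2 => ?_⟩
  have := Kcone_add hx (h ε h1 h2)
  convert this using 1
  ext j
  simp [add_assoc]

/-- The union of cells. -/
def cellU (S : GKZSetting d k) (χ ξ p : Fin d → ℝ) (T : Finset (FullCone S.F)) :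
    Set ↥(Ppts S.F.v χ) := {w | ∃ t ∈ T, Cell S.F ξ p t (pt χ w)}

/-- Downward closed sets of cones. -/
def DC (S : GKZSetting d k) (hgt : FullCone S.F → ℝ ×ₗ ℝ) (T : Finset (FullCone S.F)) : Prop :=
  ∀ t ∈ T, ∀ t', hgt t' < hgt t → t' ∈ T

/-- The height condition. -/
def HgtOK (S : GKZSetting d k) (ξ p : Fin d → ℝ) (hgt : FullCone S.F → ℝ ×ₗ ℝ) : Prop :=
  ∀ s t w x, Cell S.F ξ p s w → commonCone S.F x w → Cell S.F ξ p t (x + w) → s ≠ t →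
      hgt t < hgt s

variable {S : GKZSetting d k} {χ ξ p : Fin d → ℝ} {hgt : FullCone S.F → ℝ ×ₗ ℝ}

lemma stable_cellU (hp : Gen S.F p) (hh : HgtOK S ξ p hgt) {T : Finset (FullCone S.F)}
    (hT : DC S hgt T) : Stable S χ (cellU S χ ξ p T) := by
  rintro a w ⟨t, ht, hw⟩ hc
  have h1 : pt χ (addP a w) = intPt a + pt χ w := pt_add _ _ _
  have h2 := shadow_add hw.shadow a.2
  obtain ⟨t', ht'⟩ := exists_cell S hp h2
  refine ⟨t', ?_, by rw [h1]; exact ht'⟩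
  by_cases h : t = t'
  · exact h ▸ ht
  · exact hT t ht t' (hh t t' _ _ hw hc ht' h)

lemma fcell_Z {T : Finset (FullCone S.F)} (hh : HgtOK S ξ p hgt)
    (s : FullCone S.F) (hmax : ∀ t ∈ T, hgt t ≤ hgt s)
    (g : Fin d → ((Fin d → ℤ) →ₗ[ℤ] ℤ)) (j : Fin d) {x : Vmod S χ}
    (hx : x ∈ subC S χ (cellU S χ ξ p T)) :
    fcell S χ ξ p s (Zelt S.F (g j) • x) =
      (∑ a, MvPolynomial.C (Wm S s g j a) * MvPolynomial.X a : MvPolynomial (Fin d) ℂ) •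
        fcell S χ ξ p s x := by
  unfold subC at hx
  induction hx using Submodule.span_induction with
  | mem x hx =>
    obtain ⟨w, ⟨t, ht, hw⟩, rfl⟩ := hx
    by_cases h : t = s
    · subst h
      exact fcell_Z_in S χ ξ p t g j w hw
    · rw [fcell_Z_out, fcell_zero_of_not, smul_zero]
      · intro h'
        exact h (hw.unique h')
      · intro x hx hc
        exact absurd (hh t s _ _ hw hx hc h) (not_lt.mpr (hmax t ht))
  | zero => simp
  | add x y _ _ hx hy => simp only [smul_add, map_add, hx, hy]
  | smul c x _ hx => rw [smul_comm, map_smul, hx, map_smul, smul_comm]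

lemma forall₂_ofFn {α β : Type*} {R : α → β → Prop} {n : ℕ} {f : Fin n → α} {g : Fin n → β}
    (h : ∀ i, R (f i) (g i)) : List.Forall₂ R (List.ofFn f) (List.ofFn g) := by
  rw [List.forall₂_iff_get]
  refine ⟨by simp, fun i h1 h2 => ?_⟩
  simpa using h _

lemma weak_cellU (hp : Gen S.F p) (hh : HgtOK S ξ p hgt)
    (g : Fin d → ((Fin d → ℤ) →ₗ[ℤ] ℤ)) (hg : Submodule.span ℤ (Set.range g) = ⊤) (n : ℕ) :
    ∀ (T : Finset (FullCone S.F)) (_ : T.card = n) (hT : DC S hgt T),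
      IsWeaklyRegular (subU S χ (cellU S χ ξ p T) (stable_cellU hp hh hT))
        (List.ofFn fun j => Zelt S.F (g j)) := by
  classical
  induction n with
  | zero =>
    intro T hc hT
    have hTe : T = ∅ := Finset.card_eq_zero.mp hc
    have : Subsingleton (subU S χ (cellU S χ ξ p T) (stable_cellU hp hh hT)) := by
      have hbot : subU S χ (cellU S χ ξ p T) (stable_cellU hp hh hT) = ⊥ := by
        rw [eq_bot_iff]
        intro x hx
        rw [mem_subU] at hx
        have he : cellU S χ ξ p T = ∅ := by subst hTe; ext w; simp [cellU]
        rw [he] at hx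
        simpa [subC] using hx
      rw [hbot]
      infer_instance
    constructor
    intro i hi x y _
    obtain ⟨x, rfl⟩ := Submodule.Quotient.mk_surjective _ x
    obtain ⟨y, rfl⟩ := Submodule.Quotient.mk_surjective _ y
    rw [Subsingleton.elim x y]
  | succ n ih =>
    intro T hc hT
    obtain ⟨s, hs, hmax⟩ := Finset.exists_max_image T hgt
      (Finset.card_pos.mp (by omega))
    have hT' : DC S hgt (T.erase s) := by
      intro t ht t' htt
      have ht2 := Finset.mem_of_mem_erase ht
      refine Finset.mem_erase.mpr ⟨?_, hT t ht2 t' htt⟩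
      rintro rfl
      exact absurd (hmax t ht2) (not_le.mpr htt)
    have hw := ih (T.erase s) (by rw [Finset.card_erase_of_mem hs, hc]; rfl) hT'
    set M := subU S χ (cellU S χ ξ p T) (stable_cellU hp hh hT) with hM
    set N' := subU S χ (cellU S χ ξ p (T.erase s)) (stable_cellU hp hh hT') with hN'
    have hle : N' ≤ M := by
      intro x hx
      rw [hN', mem_subU, mem_subC] at hx
      rw [hM, mem_subU, mem_subC]
      intro w hw
      obtain ⟨t, ht, h⟩ := hx w hw
      exact ⟨t, Finset.mem_of_mem_erase ht, h⟩
    let N : Submodule (Rring S.F) M := Submodule.comap M.subtype N'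
    have hNw : IsWeaklyRegular N (List.ofFn fun j => Zelt S.F (g j)) :=
      ((Submodule.comapSubtypeEquivOfLe hle).isWeaklyRegular_congr _).mpr hw
    let f : M →+ (BB S χ ξ p s →₀ MvPolynomial (Fin d) ℂ) :=
      (fcell S χ ξ p s).toAddMonoidHom.comp M.subtype.toAddMonoidHom
    refine weak_of_quot N f ?_ ?_ _
      (List.ofFn fun j => (∑ a, MvPolynomial.C (Wm S s g j a) * MvPolynomial.X a :
        MvPolynomial (Fin d) ℂ)) ?_ hNw (weak_finsupp _ _ (weak_lin d _ (Wm_det S s g hg)))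
    · intro y
      obtain ⟨x, hx, rfl⟩ := fcell_surj S χ ξ p s y
      refine ⟨⟨x, ?_⟩, rfl⟩
      rw [hM, mem_subU, mem_subC]
      rw [mem_subC] at hx
      exact fun w hw => ⟨s, hs, hx w hw⟩
    · rintro ⟨x, hx⟩
      change fcell S χ ξ p s x = 0 ↔ x ∈ N'
      rw [hM, mem_subU, mem_subC] at hx
      rw [fcell_eq_zero, hN', mem_subU, mem_subC]
      refine forall_congr' fun w => imp_congr_right fun hw => ?_
      obtain ⟨t, ht, h⟩ := hx w hw
      constructor
      · intro hns
        refine ⟨t, Finset.mem_erase.mpr ⟨?_, ht⟩, h⟩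
        rintro rfl
        exact hns h
      · rintro ⟨t', ht', h'⟩ hs'
        exact Finset.ne_of_mem_erase ht' (h'.unique hs')
    · refine forall₂_ofFn fun j => ?_
      rintro ⟨x, hx⟩
      exact fcell_Z hh s hmax g j hx

lemma exists_full (S : GKZSetting d k) : Nonempty (FullCone S.F) := by
  obtain ⟨p, hp⟩ := exists_gen S
  obtain ⟨s, -⟩ := exists_cell S (ξ := 0) (w := 0) hp ⟨1, one_pos, fun ε _ _ => by
    convert realCone_subset_Kcone _ _ (zero_mem_realCone S.F.v ∅) using 1
    ext j; simp⟩
  exact ⟨s⟩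

lemma DC_univ [Fintype (FullCone S.F)] : DC S hgt Finset.univ := fun _ _ _ _ => Finset.mem_univ _

lemma reg_cellU [Fintype (FullCone S.F)] (hp : Gen S.F p) (hh : HgtOK S ξ p hgt)
    (g : Fin d → ((Fin d → ℤ) →ₗ[ℤ] ℤ)) (hg : Submodule.span ℤ (Set.range g) = ⊤) :
    IsRegular (subU S χ (cellU S χ ξ p Finset.univ) (stable_cellU hp hh DC_univ))
        (List.ofFn fun j => Zelt S.F (g j)) := by
  refine ⟨weak_cellU hp hh g hg _ Finset.univ rfl DC_univ, ?_⟩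
  obtain ⟨s0⟩ := exists_full S
  obtain ⟨s, hs, hmax⟩ := Finset.exists_max_image Finset.univ hgt ⟨s0, Finset.mem_univ _⟩
  set M := subU S χ (cellU S χ ξ p Finset.univ) (stable_cellU hp hh DC_univ) with hM
  let b := bx S χ ξ p s 0
  let φ : M → ℂ := fun x => MvPolynomial.constantCoeff (fcell S χ ξ p s x b)
  have hadd : ∀ x y, φ (x + y) = φ x + φ y := by
    intro x y
    simp only [φ, Submodule.coe_add, map_add, Finsupp.add_apply]
  have hzero : φ 0 = 0 := by simp [φ]
  intro htop
  have hkey : ∀ r ∈ Ideal.ofList (List.ofFn fun j => Zelt S.F (g j)), ∀ x : M, φ (r • x) = 0 := by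
    intro r hr
    unfold Ideal.ofList at hr
    induction hr using Submodule.span_induction with
    | mem r hr =>
      intro x
      obtain ⟨j, rfl⟩ := List.mem_ofFn.mp hr
      have := fcell_Z hh s hmax g j (mem_subU.mp x.2)
      simp only [φ, Submodule.coe_smul]
      rw [this, Finsupp.smul_apply, smul_eq_mul, map_mul, map_sum]
      simp
    | zero => intro x; rw [zero_smul (Rring S.F) x, hzero]
    | add r r' _ _ h h' => intro x; rw [add_smul, hadd, h, h', add_zero]
    | smul a r _ h =>
      intro x
      have e : (a * r) • x = r • a • x := (congrArg (· • x) (mul_comm a r)).trans (mul_smul r a x)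
      exact (congrArg φ e).trans (h _)
  obtain ⟨x, hx, hfx⟩ := fcell_surj S χ ξ p s (Finsupp.single b 1)
  have hxM : x ∈ M := by
    rw [hM, mem_subU, mem_subC]
    rw [mem_subC] at hx
    exact fun w hw => ⟨s, hs, hx w hw⟩
  have hx1 : φ ⟨x, hxM⟩ = 1 := by
    simp only [φ, hfx, Finsupp.single_eq_same, map_one]
  have hx2 : (⟨x, hxM⟩ : M) ∈ Ideal.ofList (List.ofFn fun j => Zelt S.F (g j)) •
      (⊤ : Submodule (Rring S.F) M) := htop ▸ Submodule.mem_top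
  have hx3 : φ ⟨x, hxM⟩ = 0 := by
    refine Submodule.smul_induction_on hx2 (fun r hr n _ => hkey r hr n) ?_
    intro x y hx hy
    rw [hadd, hx, hy, add_zero]
  rw [hx3] at hx1
  exact zero_ne_one hx1

/-! ### Transfer to the modules of the statement -/

lemma cellU_univ [Fintype (FullCone S.F)] (hp : Gen S.F p) (w : ↥(Ppts S.F.v χ)) :
    w ∈ cellU S χ ξ p Finset.univ ↔ ShadowAt S.F ξ (pt χ w) := by
  constructor
  · rintro ⟨t, -, h⟩
    exact h.shadow
  · intro h
    obtain ⟨s, hs⟩ := exists_cell S hp h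
    exact ⟨s, Finset.mem_univ _, hs⟩

lemma shadow_zero {x : Fin d → ℝ} (h : x ∈ Kcone S.F.v) : ShadowAt S.F 0 x :=
  ⟨1, one_pos, fun ε _ _ => by simpa using h⟩

lemma reg_V (S : GKZSetting d k) (χ : Fin d → ℝ)
    (g : Fin d → ((Fin d → ℤ) →ₗ[ℤ] ℤ)) (hg : Submodule.span ℤ (Set.range g) = ⊤) :
    IsRegular (Vmod S χ) (List.ofFn fun j => Zelt S.F (g j)) := by
  classical
  obtain ⟨p, hp⟩ := exists_gen S
  obtain ⟨hgt, hh⟩ := exists_hgt S 0 p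
  have h := reg_cellU (χ := χ) hp hh g hg
  have htop : subU S χ (cellU S χ 0 p Finset.univ) (stable_cellU hp hh DC_univ) = ⊤ := by
    rw [eq_top_iff]
    intro x _
    rw [mem_subU, mem_subC]
    intro w _
    rw [cellU_univ hp]
    exact shadow_zero w.2
  exact ((LinearEquiv.ofTop _ htop).isRegular_congr _).mp h

lemma reg_M (S : GKZSetting d k) (χ : Fin d → ℝ)
    (g : Fin d → ((Fin d → ℤ) →ₗ[ℤ] ℤ)) (hg : Submodule.span ℤ (Set.range g) = ⊤) :
    IsRegular (Mmod S.F χ) (List.ofFn fun j => Zelt S.F (g j)) := by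
  obtain ⟨Φ, -⟩ := exists_equivM S χ
  exact (Φ.isRegular_congr _).mpr (reg_V S χ g hg)

lemma reg_R (S : GKZSetting d k)
    (g : Fin d → ((Fin d → ℤ) →ₗ[ℤ] ℤ)) (hg : Submodule.span ℤ (Set.range g) = ⊤) :
    IsRegular (Rring S.F) (List.ofFn fun j => Zelt S.F (g j)) := by
  obtain ⟨Φ, -⟩ := exists_equivR S
  exact (Φ.isRegular_congr _).mpr (reg_V S 0 g hg)

lemma reg_shadow (S : GKZSetting d k) (χ ξ : Fin d → ℝ)
    (g : Fin d → ((Fin d → ℤ) →ₗ[ℤ] ℤ)) (hg : Submodule.span ℤ (Set.range g) = ⊤) :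
    IsRegular (↥(ShadowSub S.F χ ξ)) (List.ofFn fun j => Zelt S.F (g j)) := by
  classical
  obtain ⟨Φ, hΦ⟩ := exists_equivM S χ
  obtain ⟨p, hp⟩ := exists_gen S
  obtain ⟨hgt, hh⟩ := exists_hgt S ξ p
  have h := reg_cellU (χ := χ) hp hh g hg
  have hmap : (ShadowSub S.F χ ξ).map (Φ : Mmod S.F χ →ₗ[Rring S.F] Vmod S χ) =
      subU S χ (cellU S χ ξ p Finset.univ) (stable_cellU hp hh DC_univ) := by
    unfold ShadowSub
    rw [Submodule.map_span]
    apply le_antisymm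
    · rw [Submodule.span_le]
      rintro _ ⟨_, ⟨w, hw, rfl⟩, rfl⟩
      have h1 : w ∈ cellU S χ ξ p Finset.univ := (cellU_univ hp w).mpr hw.2.2
      change Φ (Mgen S.F χ w) ∈ subC S χ (cellU S χ ξ p Finset.univ)
      rw [hΦ]
      exact Submodule.subset_span ⟨w, h1, rfl⟩
    · intro x hx
      rw [mem_subU] at hx
      unfold subC at hx
      induction hx using Submodule.span_induction with
      | mem x hx =>
        obtain ⟨w, hw, rfl⟩ := hx
        refine Submodule.subset_span ⟨Mgen S.F χ w, ⟨w, ⟨⟨w, fun j => rfl⟩, w.2, ?_⟩, rfl⟩, hΦ w⟩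
        exact (cellU_univ hp w).mp hw
      | zero => exact Submodule.zero_mem _
      | add x y _ _ hx hy => exact Submodule.add_mem _ hx hy
      | smul c x _ hx =>
        rw [← algebraMap_smul (Rring S.F) c x]
        exact Submodule.smul_mem _ _ hx
  rw [← hmap] at h
  exact ((Φ.submoduleMap (ShadowSub S.F χ ξ)).isRegular_congr _).mpr h

end GKZpaper

namespace GKZpaper
open RingTheory.Sequence

variable {d k : ℕ}

/-! ### The Krull dimension -/

lemma dim_le_of_ringHom {P R : Type*} [CommRing P] [CommRing R] (θ : P →+* R)
    (h : ∀ r, θ.IsIntegralElem r) : ringKrullDim R ≤ ringKrullDim P := by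
  let _ := θ.toAlgebra
  have : Algebra.IsIntegral P R := ⟨h⟩
  exact dim_le_of_integral

lemma exists_intClosure {P R : Type*} [CommRing P] [CommRing R] (θ : P →+* R) :
    ∃ T : Subring R, (∀ r, r ∈ T ↔ θ.IsIntegralElem r) ∧ (∀ q, θ q ∈ T) ∧
      ∀ r n, 0 < n → r ^ n ∈ T → r ∈ T := by
  let _ := θ.toAlgebra
  refine ⟨(integralClosure P R).toSubring, fun r => Iff.rfl, fun q => ?_, fun r n hn h => ?_⟩
  · exact isIntegral_algebraMap (R := P) (A := R) (x := q)
  · exact IsIntegral.of_pow (R := P) hn h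

variable (S : GKZSetting d k)

lemma mem_full {x : Fin d → ℝ} (h : x ∈ Kcone S.F.v) :
    ∃ s : FullCone S.F, x ∈ realCone S.F.v s.1 := by
  obtain ⟨p, hp⟩ := exists_gen S
  obtain ⟨s, hs⟩ := exists_cell S hp (shadow_zero h)
  exact ⟨s, hs.mem⟩

/-- The ideals of the cones. -/
lemma exists_ideals : ∃ J : FullCone S.F → Ideal (Rring S.F),
    (∀ t (a : ↥(latticeK S.F.v)), intPt (a : Fin d → ℤ) ∉ realCone S.F.v t.1 → Rgen S.F a ∈ J t) ∧
    ∀ r, (∀ t, r ∈ J t) → r = 0 := by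
  obtain ⟨Φ, hΦ⟩ := exists_equivR S
  have hst : ∀ t : FullCone S.F, Stable S 0
      {w : ↥(Ppts S.F.v (0 : Fin d → ℝ)) | pt 0 (w : Fin d → ℤ) ∉ realCone S.F.v t.1} := by
    rintro t a w hw ⟨I, hI, h1, h2⟩ hmem
    apply hw
    have h3 : pt 0 (addP a w : Fin d → ℤ) = intPt (a : Fin d → ℤ) + pt 0 (w : Fin d → ℤ) :=
      pt_add _ _ _
    change pt 0 (addP a w : Fin d → ℤ) ∈ _ at hmem
    rw [h3, add_comm] at hmem
    exact face S.F hI t.2.1 h2 h1 hmem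
  refine ⟨fun t => (subU S 0 _ (hst t)).comap (Φ : Rring S.F →ₗ[Rring S.F] Vmod S 0),
    fun t a ha => ?_, fun r hr => ?_⟩
  · have h1 := hΦ ⟨a, by rw [latticeK_eq]; exact a.2⟩
    change Φ (Rgen S.F a) ∈ subC S 0 _
    have h2 : Φ (Rgen S.F a) = bv S 0 ⟨a, by rw [latticeK_eq]; exact a.2⟩ := h1
    rw [h2]
    refine Submodule.subset_span ⟨_, ?_, rfl⟩
    change pt 0 (a : Fin d → ℤ) ∉ _
    rwa [pt_zero]
  · have h0 : Φ r ∈ subC S 0 ∅ := by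
      rw [mem_subC]
      intro w hw
      obtain ⟨t, ht⟩ := mem_full S w.2
      have h1 : Φ r ∈ subC S 0 _ := hr t
      rw [mem_subC] at h1
      exact h1 w hw ht
    have h2 : Φ r = 0 := by simpa [subC] using h0
    exact (LinearEquiv.map_eq_zero_iff Φ).mp h2

/-- The parameter homomorphism. -/
noncomputable def thetaZ (g : Fin d → ((Fin d → ℤ) →ₗ[ℤ] ℤ)) :
    MvPolynomial (Fin d) ℂ →ₐ[ℂ] Rring S.F := MvPolynomial.aeval fun j => Zelt S.F (g j)

lemma Zelt_map {A : Type*} [CommRing A] [Algebra ℂ A] (π : Rring S.F →ₐ[ℂ] A)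
    (t : FullCone S.F) (hπ : ∀ i ∈ raysIdx S.F, i ∉ t.1 → π (rv S i) = 0)
    (g : Fin d → ((Fin d → ℤ) →ₗ[ℤ] ℤ)) (j : Fin d) :
    π (Zelt S.F (g j)) = ∑ a, Wm S t g j a • π (rv S ((chart S.F t).e a)) := by
  classical
  unfold Zelt
  rw [map_sum]
  symm
  apply Fintype.sum_of_injective (chart S.F t).e (chart S.F t).inj
  · intro i hi
    have his : i ∉ t.1 := fun h => hi (((chart S.F t).img i).mp h)
    split_ifs with h
    · have := hπ i h his
      unfold rv at this
      rw [map_mul, this, mul_zero]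
    · exact map_zero _
  · intro a
    have : (chart S.F t).e a ∈ t.1 := ((chart S.F t).img _).mpr ⟨a, rfl⟩
    rw [if_pos (ray_of_mem S t this), map_mul, AlgHom.commutes, Algebra.smul_def]
    rfl

lemma rv_map {A : Type*} [CommRing A] [Algebra ℂ A] (π : Rring S.F →ₐ[ℂ] A)
    (t : FullCone S.F) (hπ : ∀ i ∈ raysIdx S.F, i ∉ t.1 → π (rv S i) = 0)
    (g : Fin d → ((Fin d → ℤ) →ₗ[ℤ] ℤ)) (V : Matrix (Fin d) (Fin d) ℂ)
    (hV : V * Wm S t g = 1) (a : Fin d) :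
    π (rv S ((chart S.F t).e a)) = π (∑ j, V a j • Zelt S.F (g j)) := by
  rw [map_sum]
  have h1 : ∀ j, π (V a j • Zelt S.F (g j)) =
      ∑ a', (V a j * Wm S t g j a') • π (rv S ((chart S.F t).e a')) := by
    intro j
    rw [map_smul, Zelt_map S π t hπ g, Finset.smul_sum]
    simp only [smul_smul]
  simp only [h1]
  rw [Finset.sum_comm]
  simp only [← Finset.sum_smul]
  have hVa : ∀ a', ∑ j, V a j * Wm S t g j a' = if a = a' then 1 else 0 := by
    intro a'
    have := congrFun (congrFun hV a) a'
    rw [Matrix.mul_apply, Matrix.one_apply] at this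
    exact this
  simp [hVa]

lemma exists_quot {R : Type} [CommRing R] [Algebra ℂ R] (J : Ideal R) :
    ∃ (A : Type) (_ : CommRing A) (_ : Algebra ℂ A) (π : R →ₐ[ℂ] A), ∀ x, π x = 0 ↔ x ∈ J :=
  ⟨R ⧸ J, inferInstance, inferInstance, Ideal.Quotient.mkₐ ℂ J,
    fun _ => Ideal.Quotient.eq_zero_iff_mem⟩

lemma rv_integral (g : Fin d → ((Fin d → ℤ) →ₗ[ℤ] ℤ))
    (hg : Submodule.span ℤ (Set.range g) = ⊤) (i : Fin k) (hi : i ∈ raysIdx S.F) :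
    (thetaZ S g).toRingHom.IsIntegralElem (rv S i) := by
  classical
  obtain ⟨J, hJ1, hJ2⟩ := exists_ideals S
  have hq : ∀ t : FullCone S.F, ∃ q : Polynomial (MvPolynomial (Fin d) ℂ), q.Monic ∧
      q.eval₂ (thetaZ S g).toRingHom (rv S i) ∈ J t := by
    intro t
    by_cases hit : i ∈ t.1
    · obtain ⟨a, rfl⟩ := ((chart S.F t).img i).mp hit
      obtain ⟨A, _, _, π, hker⟩ := exists_quot (J t)
      let V := (Wm S t g)⁻¹
      have hV : V * Wm S t g = 1 := Matrix.nonsing_inv_mul _ (Wm_det S t g hg)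
      let u : MvPolynomial (Fin d) ℂ := ∑ j, V a j • MvPolynomial.X j
      refine ⟨Polynomial.X - Polynomial.C u, Polynomial.monic_X_sub_C u, ?_⟩
      rw [Polynomial.eval₂_sub, Polynomial.eval₂_X, Polynomial.eval₂_C, ← hker,
        map_sub, sub_eq_zero]
      have hπ : ∀ i ∈ raysIdx S.F, i ∉ t.1 → π (rv S i) = 0 := by
        intro i hi hit
        exact (hker _).mpr (hJ1 t _ (ray_notMem S.F t hi hit))
      have hu : thetaZ S g u = ∑ j, V a j • Zelt S.F (g j) := by
        simp only [u, thetaZ, map_sum, map_smul, MvPolynomial.aeval_X]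
      change π (rv S _) = π (thetaZ S g u)
      rw [hu]
      exact rv_map S π t hπ g V hV a
    · refine ⟨Polynomial.X, Polynomial.monic_X, ?_⟩
      rw [Polynomial.eval₂_X]
      exact hJ1 t _ (ray_notMem S.F t hi hit)
  choose q hqm hqJ using hq
  refine ⟨∏ t, q t, Polynomial.monic_prod_of_monic _ _ fun t _ => hqm t, ?_⟩
  apply hJ2
  intro t
  rw [Polynomial.eval₂_finsetProd]
  exact Ideal.mem_of_dvd _ (Finset.dvd_prod_of_mem _ (Finset.mem_univ t)) (hqJ t)

lemma Rgen_pow (a : ↥(latticeK S.F.v)) (n : ℕ) (h : n • (a : Fin d → ℤ) ∈ latticeK S.F.v) :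
    Rgen S.F a ^ n = Rgen S.F ⟨n • (a : Fin d → ℤ), h⟩ := by
  obtain ⟨I, hI, ha⟩ := exists_cone S a.2
  have hmem : ∀ n : ℕ, intPt (n • (a : Fin d → ℤ)) ∈ realCone S.F.v I := by
    intro n
    induction n with
    | zero => rw [zero_smul, intPt_zero]; exact zero_mem_realCone _ _
    | succ n ih => rw [succ_nsmul, intPt_add]; exact realCone_add ih ha
  induction n with
  | zero => rw [pow_zero, Rgen_zero]; exact zero_smul _ _
  | succ n ih =>
    rw [pow_succ, ih (realCone_subset_Kcone _ _ (hmem n))]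
    refine Rgen_mul S.F _ _ _ ⟨I, hI, hmem n, ha⟩ (succ_nsmul _ _)

lemma exists_mult (s : FullCone S.F) (a : Fin d → ℤ) (ha : intPt a ∈ realCone S.F.v s.1) :
    ∃ (D : ℕ) (m : Fin d → ℕ), 0 < D ∧ D • a = ∑ i, m i • S.F.v ((chart S.F s).e i) := by
  let V : Matrix (Fin d) (Fin d) ℤ := fun l i => S.F.v ((chart S.F s).e i) l
  have hV : ∀ u, V.mulVec u = comb S s u := by
    intro u
    ext l
    simp [Matrix.mulVec, dotProduct, comb, V, mul_comm]
  have hdet : V.det ≠ 0 := by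
    intro h0
    obtain ⟨u, hu, hVu⟩ := Matrix.exists_mulVec_eq_zero_iff.mpr h0
    apply hu
    ext i
    have h4 := co_comb S s u i
    rw [← hV, hVu, intPt_zero, map_zero] at h4
    exact_mod_cast h4.symm
  let μ : Fin d → ℤ := V.det • V.adjugate.mulVec a
  have hμ : comb S s μ = (V.det ^ 2) • a := by
    rw [← hV, Matrix.mulVec_smul, Matrix.mulVec_mulVec, Matrix.mul_adjugate, Matrix.smul_mulVec,
      Matrix.one_mulVec, smul_smul, sq]
  have hμ0 : ∀ i, 0 ≤ μ i := by
    intro i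
    have h1 := co_comb S s μ i
    rw [hμ, intPt_zsmul, map_smul, smul_eq_mul] at h1
    have h2 := (mem_cone_iff S.F s).mp ha i
    have h3 : (0 : ℝ) ≤ μ i := by
      rw [← h1]
      refine mul_nonneg ?_ h2
      push_cast
      positivity
    exact_mod_cast h3
  refine ⟨(V.det ^ 2).toNat, fun i => (μ i).toNat, ?_, ?_⟩
  · have : 0 < V.det ^ 2 := by positivity
    omega
  · have h1 : ((V.det ^ 2).toNat : ℤ) = V.det ^ 2 := Int.toNat_of_nonneg (by positivity)
    rw [← natCast_zsmul, h1, ← hμ]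
    unfold comb
    refine Finset.sum_congr rfl fun i _ => ?_
    rw [← natCast_zsmul, Int.toNat_of_nonneg (hμ0 i)]

lemma all_integral (g : Fin d → ((Fin d → ℤ) →ₗ[ℤ] ℤ))
    (hg : Submodule.span ℤ (Set.range g) = ⊤) (r : Rring S.F) :
    (thetaZ S g).toRingHom.IsIntegralElem r := by
  obtain ⟨T, hT, hθ, hpow⟩ := exists_intClosure (thetaZ S g).toRingHom
  rw [← hT]
  have hgen : ∀ a, Rgen S.F a ∈ T := by
    intro a
    obtain ⟨s, hs⟩ := mem_full S a.2
    let Q : AddSubmonoid (Fin d → ℤ) :=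
      { carrier := {x | intPt x ∈ realCone S.F.v s.1 ∧ ∀ h, Rgen S.F ⟨x, h⟩ ∈ T}
        add_mem' := by
          rintro x y ⟨hx, hx'⟩ ⟨hy, hy'⟩
          have hx2 : x ∈ latticeK S.F.v := realCone_subset_Kcone _ _ hx
          have hy2 : y ∈ latticeK S.F.v := realCone_subset_Kcone _ _ hy
          refine ⟨by rw [intPt_add]; exact realCone_add hx hy, fun h => ?_⟩
          rw [← Rgen_mul S.F ⟨x, hx2⟩ ⟨y, hy2⟩ ⟨x + y, h⟩ ⟨s.1, s.2.1, hx, hy⟩ rfl]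
          exact T.mul_mem (hx' _) (hy' _)
        zero_mem' := by
          refine ⟨by rw [intPt_zero]; exact zero_mem_realCone _ _, fun h => ?_⟩
          rw [Rgen_zero S.F _ rfl]
          exact T.one_mem }
    obtain ⟨D, m, hD, hm⟩ := exists_mult S s a hs
    have hQ : D • (a : Fin d → ℤ) ∈ Q := by
      rw [hm]
      refine Q.sum_mem fun i _ => Q.nsmul_mem ?_ _
      have hi : (chart S.F s).e i ∈ s.1 := ((chart S.F s).img _).mpr ⟨i, rfl⟩
      refine ⟨gen_mem_realCone _ hi, fun h => ?_⟩
      exact (hT _).mpr (rv_integral S g hg _ (ray_of_mem S s hi))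
    refine hpow _ D hD ?_
    have hl : D • (a : Fin d → ℤ) ∈ latticeK S.F.v := realCone_subset_Kcone _ _ hQ.1
    rw [Rgen_pow S a D hl]
    exact hQ.2 _
  have hr := Rring_span S.F r
  induction hr using Submodule.span_induction with
  | mem x hx => obtain ⟨a, rfl⟩ := hx; exact hgen a
  | zero => exact T.zero_mem
  | add x y _ _ hx hy => exact T.add_mem hx hy
  | smul c x _ hx =>
    have h1 : c • x = algebraMap ℂ (Rring S.F) c * x := Algebra.smul_def c x
    rw [h1]
    refine T.mul_mem ?_ hx
    have h2 := hθ (algebraMap ℂ _ c)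
    have h3 : (thetaZ S g).toRingHom (algebraMap ℂ _ c) = algebraMap ℂ (Rring S.F) c :=
      (thetaZ S g).commutes c
    rwa [h3] at h2

lemma dim_R (g : Fin d → ((Fin d → ℤ) →ₗ[ℤ] ℤ))
    (hg : Submodule.span ℤ (Set.range g) = ⊤) :
    ringKrullDim (Rring S.F) = (d : WithBot (WithTop ℕ)) := by
  apply le_antisymm
  · refine (dim_le_of_ringHom (thetaZ S g).toRingHom (all_integral S g hg)).trans ?_
    rw [MvPolynomial.ringKrullDim_of_isNoetherianRing, ringKrullDim_eq_zero_of_field]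
    simp only [Nat.card_eq_fintype_card, Fintype.card_fin, zero_add]
    exact le_rfl
  · exact dim_ge_of_regular d _ (by simp) (reg_R S g hg)

end GKZpaper

namespace GKZpaper

/-- **Proposition 4.2.** The ring `R = ℂ[𝚺]` and the `R`-modules `ℂ[𝚺;χ]` and
`ℂ[𝚺;χ]_ξ` are Cohen–Macaulay of dimension `d`: the ring has Krull dimension `d` and,
for any basis `(g₁,…,g_d)` of `M = Hom(N,ℤ)`, the elements
`Z_j = ∑_{i ∈ I(𝚺)} g_j(vᵢ)[vᵢ]` form a regular sequence in `R`, and hence on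
`ℂ[𝚺;χ]` and on `ℂ[𝚺;χ]_ξ` (a maximal regular sequence of length `d = dim`). -/
theorem statement11 {d k : ℕ} (S : GKZSetting d k)
    (g : Fin d → ((Fin d → ℤ) →ₗ[ℤ] ℤ))
    (hg : Submodule.span ℤ (Set.range g) = ⊤)
    (χ ξ : Fin d → ℝ) :
    ringKrullDim (Rring S.F) = (d : WithBot (WithTop ℕ)) ∧
    RingTheory.Sequence.IsRegular (Rring S.F) (List.ofFn fun j => Zelt S.F (g j)) ∧
    RingTheory.Sequence.IsRegular (Mmod S.F χ) (List.ofFn fun j => Zelt S.F (g j)) ∧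
    RingTheory.Sequence.IsRegular (↥(ShadowSub S.F χ ξ))
      (List.ofFn fun j => Zelt S.F (g j)) := by
  exact ⟨dim_R S g hg, reg_R S g hg, reg_M S χ g hg, reg_shadow S χ ξ g hg⟩

end GKZpaper
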